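/- arXiv:math/0610493 — 2 statements merged into one kernel-verified Lean document; each statement's English description precedes it below -/
import Mathlib

section
/- For the symmetric pair (g,g₀) = (so_{n+m}, so_m ∔ so_n), with g₀ embedded block-diagonally and g₁ the off-diagonal blocks, there is a good generating system: namely, the coefficients of the characteristic polynomial, i.e. the polynomials f_i(M) = (sum of all principal 2i-minors of the skew-symmetric matrix M) for i = 1,…,⌊(n+m)/2⌋ when n+m is odd, and f₁,…,f_{(n+m)/2 − 1} together with the Pfaffian Pf when n+m is even, form a set of basic invariants of 𝕜[g]^G whose highest g₁-degree components f_i^• (and Pf^•) are algebraically independent. -/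
/-!
Everything is controlled by restriction to a Cartan subalgebra `t` of `so_N`, `N = m + n`, given by
a `Pairing` of the indices: `t` is spanned by the elementary skew-symmetric matrices of the pairs,
and `Pairing.res` is the restriction map `𝕜[so_N] → 𝕜[t] = 𝕜[y₀, …, y_{l-1}]`.

*Invariance.* The sums of principal minors are unchanged by conjugation, and the Pfaffian sum of
`B S Bᵀ` is `det B` times that of `S`. Applying this over the dual numbers to `1 + ε A` with `A`
skew-symmetric gives annihilation by the vector fields (`soBasicInv_invariant`).

*Generation.* Restriction is injective on infinitesimal invariants (`Pairing.eq_zero_of_res`): at a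
regular point of `t` the gradient of an invariant has no transversal part, and an induction along
the expansion in transversal directions, using Euler's identity, kills the whole polynomial. The
restriction of an invariant is symmetric, in each of its monomials all exponents have the same
parity, and they are even if some index is unpaired; these facts are the invariance under the Weyl
group, obtained from infinitesimal rotations in suitable planes (`evalAt_rotate`). The basic
invariants restrict to `e_j(y²)` and, for the Pfaffian, to a nonzero multiple of `∏ y_i`, so by the
fundamental theorem on symmetric polynomials their restrictions generate all such polynomials
(`mem_adjoin_of_invariant`).

*Algebraic independence.* The restriction of the `i`-th basic invariant has the lexicographically
leading monomial `(y₀ ⋯ y_i)^a` with `a = 2`, or `a = 1` for the Pfaffian (`hasLead_res`). These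
exponents are linearly independent, hence so are all products of the restrictions
(`algebraicIndependent_of_degree`). For the components `f^•` the subalgebra `t` is chosen to contain
a maximal abelian subspace of `g₁`, spanned by its first `min m n` coordinates (`blockPairing`).
Then the `g₁`-degree of the leading monomial, `a * min (i + 1) (min m n)`, is also an upper bound
for the `g₁`-degree of every term of the `i`-th invariant (`component_soBasicInv`), because a
product of entries of a principal minor uses every row and column at most once. So this monomial
survives in the restriction of `f^•` (`Pairing.hasLead_soTop`), and the same criterion applies.
-/


/-!
STATEMENT 10: For the symmetric pair (g,g₀) = (so_{n+m}, so_m ∔ so_n), with g₀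
embedded block-diagonally (blocks of sizes m and n) and g₁ the off-diagonal blocks,
there is a good generating system: the coefficients of the characteristic polynomial,
i.e. the polynomials f_i(M) = (sum of all principal 2i-minors of the generic
skew-symmetric matrix M), i = 1,…,⌊(n+m)/2⌋, when n+m is odd — and f₁,…,f_{(n+m)/2−1}
together with the Pfaffian Pf when n+m is even — form a set of basic invariants of
𝕜[g]^G whose highest g₁-degree components f_i^• (and Pf^•) are algebraically
independent.

Conventions: 𝕜[so_N] (N = m+n) = `MvPolynomial {(i,j) : i < j} 𝕜` (the strictly
upper-triangular entries of the generic skew-symmetric matrix M).  G = SO_N is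
connected, so invariance = infinitesimal invariance: annihilation by the vector fields
p ↦ Σ_v ∂p/∂x_v · ([A,M])_v for all skew-symmetric A over 𝕜.  The Pfaffian is given
by its standard formula Pf(M) = (2^k k!)⁻¹ Σ_{σ} sgn(σ) Π_i M(σ(2i−1),σ(2i)) (N = 2k).
"Basic invariants" = invariant, algebraically independent, generating the invariant
algebra.  The family `soBasicInv` below is f₁,…,f_l with the last one replaced by the
Pfaffian exactly when N is even (l = ⌊N/2⌋ = rk so_N).  The g₁-degree of a variable
x_{ij} (i<j) is 1 iff i < m ≤ j; f^• is the bi-homogeneous component of highest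
g₁-degree.
-/

open MvPolynomial Matrix

noncomputable section

variable {𝕜 : Type*} [Field 𝕜] [IsAlgClosed 𝕜] [CharZero 𝕜]

/-- Index type for the entries of a skew-symmetric matrix: pairs (i,j) with i < j. -/
def SkewIx (N : ℕ) := {p : Fin N × Fin N // p.1 < p.2}

instance (N : ℕ) : Fintype (SkewIx N) := by unfold SkewIx; infer_instance
instance (N : ℕ) : DecidableEq (SkewIx N) := by unfold SkewIx; infer_instance

/-- The generic skew-symmetric N × N matrix. -/
def genSkew (N : ℕ) : Matrix (Fin N) (Fin N) (MvPolynomial (SkewIx N) 𝕜) :=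
  fun i j =>
    if h : i < j then X ⟨(i, j), h⟩
    else if h' : j < i then - X ⟨(j, i), h'⟩
    else 0

/-- The sum of all principal minors of order k of a square matrix. -/
def principalMinorSum {N : ℕ} {R : Type*} [CommRing R]
    (k : ℕ) (A : Matrix (Fin N) (Fin N) R) : R :=
  ∑ s ∈ Finset.univ.powersetCard k,
    (A.submatrix (fun i : {x : Fin N // x ∈ s} => (i : Fin N))
      (fun j : {x : Fin N // x ∈ s} => (j : Fin N))).det

/-- The Pfaffian of the generic skew-symmetric matrix (for N even; standard formula
Pf = (2^k k!)⁻¹ Σ_σ sgn(σ) Π_{i<k} M(σ(2i), σ(2i+1)), N = 2k). -/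
def pfaffianPoly (N : ℕ) : MvPolynomial (SkewIx N) 𝕜 :=
  C ((2 ^ (N / 2) * (N / 2).factorial : 𝕜))⁻¹ *
    ∑ σ : Equiv.Perm (Fin N), (Equiv.Perm.sign σ : ℤ) •
      ∏ i : Fin (N / 2),
        genSkew (𝕜 := 𝕜) N (σ ⟨2 * (i : ℕ), by have := i.isLt; omega⟩)
          (σ ⟨2 * (i : ℕ) + 1, by have := i.isLt; omega⟩)

/-- The infinitesimal action of a skew-symmetric A ∈ so_N(𝕜) on 𝕜[so_N]
(conjugation direction [A,M]). -/
def soDeriv {N : ℕ} (A : Matrix (Fin N) (Fin N) 𝕜)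
    (p : MvPolynomial (SkewIx N) 𝕜) : MvPolynomial (SkewIx N) 𝕜 :=
  ∑ v : SkewIx N,
    pderiv v p * ((A.map C * genSkew N - genSkew N * A.map C :
      Matrix (Fin N) (Fin N) (MvPolynomial (SkewIx N) 𝕜)) v.1.1 v.1.2)

/-- The g₁-degree weight for the pair (so_{m+n}, so_m ∔ so_n): off-diagonal-block
entries have weight 1. -/
def soWeight (m N : ℕ) : SkewIx N → ℕ :=
  fun v => if (v.1.1 : ℕ) < m ∧ m ≤ (v.1.2 : ℕ) then 1 else 0

/-- `f^•`: the bi-homogeneous component of highest degree with respect to g₁. -/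
def soTop (m N : ℕ) (f : MvPolynomial (SkewIx N) 𝕜) : MvPolynomial (SkewIx N) 𝕜 :=
  weightedHomogeneousComponent (soWeight m N)
    (sSup {d | weightedHomogeneousComponent (soWeight m N) d f ≠ 0}) f

/-- The basic invariants f₁, …, f_{⌊N/2⌋} of so_N (N = m+n): the sums of principal
2i-minors, the last replaced by the Pfaffian when N is even. -/
def soBasicInv (m n : ℕ) (i : Fin ((m + n) / 2)) : MvPolynomial (SkewIx (m + n)) 𝕜 :=
  if 2 * ((i : ℕ) + 1) = m + n then pfaffianPoly (m + n)
  else principalMinorSum (2 * ((i : ℕ) + 1)) (genSkew (m + n))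

/-! ### Evaluation at skew-symmetric matrices -/

/-- Evaluation of a polynomial function on `so_N` at a matrix `S` over an `F`-algebra; only the
entries of `S` above the diagonal are used. -/
def evalAt {F : Type*} [Field F] {N : ℕ} {R : Type*} [CommRing R] [Algebra F R]
    (S : Matrix (Fin N) (Fin N) R) : MvPolynomial (SkewIx N) F →ₐ[F] R :=
  aeval (fun v => S v.1.1 v.1.2)

section evaluation

variable {F : Type*} [Field F] {N : ℕ} {R : Type*} [CommRing R] [Algebra F R]

lemma map_genSkew (S : Matrix (Fin N) (Fin N) R) (hS : ∀ i j, S i j = -S j i)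
    (hd : ∀ i, S i i = 0) :
    (genSkew (𝕜 := F) N).map (evalAt S) = S := by
  ext i j
  simp only [Matrix.map_apply, genSkew]
  split_ifs with h h'
  · exact aeval_X _ _
  · rw [map_neg, hS i j]
    exact congrArg _ (aeval_X _ _)
  · obtain rfl : i = j := le_antisymm (not_lt.mp h') (not_lt.mp h)
    simp [hd]

lemma genSkew_neg (i j : Fin N) : genSkew (𝕜 := F) N i j = -genSkew (𝕜 := F) N j i := by
  simp only [genSkew]
  rcases lt_trichotomy i j with h | h | h
  · simp [h, h.not_gt]
  · simp [h]
  · simp [h, h.not_gt]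

lemma genSkew_diag (i : Fin N) : genSkew (𝕜 := F) N i i = 0 := by simp [genSkew]

lemma genSkew_transpose : (genSkew (𝕜 := F) N)ᵀ = -genSkew (𝕜 := F) N := by
  ext1 i j
  exact genSkew_neg j i

lemma evalAt_X (S : Matrix (Fin N) (Fin N) R) (v : SkewIx N) :
    evalAt (F := F) S (X v) = S v.1.1 v.1.2 := by simp [evalAt]

/-- The chain rule for a derivation composed with evaluation. -/
lemma derivation_evalAt (δ : Derivation F R R) (S : Matrix (Fin N) (Fin N) R)
    (p : MvPolynomial (SkewIx N) F) :
    δ (evalAt S p) = ∑ v, evalAt S (pderiv v p) * δ (S v.1.1 v.1.2) := by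
  classical
  induction p using MvPolynomial.induction_on with
  | C a => simp [evalAt]
  | add p q hp hq => simp [hp, hq, add_mul, Finset.sum_add_distrib]
  | mul_X p w hp =>
    simp only [map_mul, Derivation.leibniz, hp, pderiv_X, smul_eq_mul, map_add, add_mul,
      Finset.sum_add_distrib, evalAt_X, Finset.mul_sum]
    congr 1
    · rw [Finset.sum_eq_single w]
      · simp
      · intro b _ hb
        simp [Pi.single_eq_of_ne hb.symm]
      · simp
    · exact Finset.sum_congr rfl fun v _ => by ring

/-- If `S` moves along the vector field of `A`, an `A`-invariant polynomial is constant on it. -/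
lemma derivation_evalAt_eq (δ : Derivation F R R) (S : Matrix (Fin N) (Fin N) R)
    (hS : ∀ i j, S i j = -S j i) (hd : ∀ i, S i i = 0) (A : Matrix (Fin N) (Fin N) F)
    (hA : ∀ i j, δ (S i j) = (A.map (algebraMap F R) * S - S * A.map (algebraMap F R)) i j)
    (p : MvPolynomial (SkewIx N) F) :
    δ (evalAt S p) = evalAt S (soDeriv A p) := by
  have hC : (A.map (C : F → MvPolynomial (SkewIx N) F)).map (evalAt S)
      = A.map (algebraMap F R) := by
    ext i j; simp [evalAt]
  have key : ∀ i j, evalAt S ((A.map C * genSkew N - genSkew N * A.map C :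
        Matrix (Fin N) (Fin N) (MvPolynomial (SkewIx N) F)) i j)
      = (A.map (algebraMap F R) * S - S * A.map (algebraMap F R)) i j := by
    intro i j
    have h1 := Matrix.map_mul (L := A.map C) (M := genSkew N) (f := (evalAt (F := F) S).toRingHom)
    have h2 := Matrix.map_mul (L := genSkew N) (M := A.map C) (f := (evalAt (F := F) S).toRingHom)
    simp only [AlgHom.toRingHom_eq_coe, RingHom.coe_coe, hC, map_genSkew S hS hd] at h1 h2
    rw [Matrix.sub_apply, map_sub, Matrix.sub_apply, ← h1, ← h2]
    rfl
  rw [derivation_evalAt, soDeriv, map_sum]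
  refine Finset.sum_congr rfl fun v _ => ?_
  rw [hA, map_mul]
  congr 1
  exact (key _ _).symm

lemma map_principalMinorSum {R' : Type*} [CommRing R'] (f : R →+* R') (k : ℕ)
    (S : Matrix (Fin N) (Fin N) R) :
    f (principalMinorSum k S) = principalMinorSum k (S.map f) := by
  simp only [principalMinorSum, map_sum, RingHom.map_det, RingHom.mapMatrix_apply]
  rfl

lemma principalMinorSum_eq_coeff (k : ℕ) (S : Matrix (Fin N) (Fin N) R) :
    principalMinorSum k S = (det (1 + (Polynomial.X : Polynomial R) • S.map Polynomial.C)).coeff k :=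
  (coeff_det_one_add_X_smul_eq_sum_minors S k).symm

lemma principalMinorSum_conj (k : ℕ) (S g g' : Matrix (Fin N) (Fin N) R) (h : g * g' = 1) :
    principalMinorSum k (g * S * g') = principalMinorSum k S := by
  have hg : g.map Polynomial.C * g'.map Polynomial.C = 1 := by
    rw [← Matrix.map_mul, h, Matrix.map_one] <;> simp
  rw [principalMinorSum_eq_coeff, principalMinorSum_eq_coeff]
  have : (1 + (Polynomial.X : Polynomial R) • (g * S * g').map Polynomial.C)
      = g.map Polynomial.C * (1 + (Polynomial.X : Polynomial R) • S.map Polynomial.C)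
        * g'.map Polynomial.C := by
    rw [Matrix.map_mul, Matrix.map_mul, mul_add, add_mul, mul_one, hg]
    simp
  rw [this, det_mul, det_mul, mul_right_comm, ← det_mul, hg, det_one, one_mul]

end evaluation

/-! ### The transformation law of the Pfaffian -/

section pfaffian

variable {N : ℕ} {R : Type*} [CommRing R]

/-- The Pfaffian sum without its normalising factor, for a matrix over any commutative ring. -/
def pfSum (S : Matrix (Fin N) (Fin N) R) : R :=
  ∑ σ : Equiv.Perm (Fin N), (Equiv.Perm.sign σ : ℤ) •
    ∏ i : Fin (N / 2), S (σ ⟨2 * (i : ℕ), by have := i.isLt; omega⟩)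
      (σ ⟨2 * (i : ℕ) + 1, by have := i.isLt; omega⟩)

lemma evalAt_pfaffianPoly {F : Type*} [Field F] [Algebra F R]
    (S : Matrix (Fin N) (Fin N) R) (hS : ∀ i j, S i j = -S j i) (hd : ∀ i, S i i = 0) :
    evalAt S (pfaffianPoly (𝕜 := F) N)
      = algebraMap F R ((2 ^ (N / 2) * (N / 2).factorial : F))⁻¹ * pfSum S := by
  have h : ∀ i j, evalAt S (genSkew (𝕜 := F) N i j) = S i j := fun i j =>
    congrFun (congrFun (map_genSkew (F := F) S hS hd) i) j
  rw [pfaffianPoly, map_mul, pfSum, map_sum]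
  congr 1
  · simp only [evalAt, algHom_C]
  · refine Finset.sum_congr rfl fun σ _ => ?_
    rw [map_zsmul, map_prod]
    simp only [h]

/-- The standard pairing of the indices `2i` and `2i + 1`. -/
def stdPair (hN : N / 2 * 2 = N) : Fin (N / 2) × Fin 2 ≃ Fin N :=
  finProdFinEquiv.trans (finCongr hN)

lemma pfSum_eq (hN : N / 2 * 2 = N) (S : Matrix (Fin N) (Fin N) R) :
    pfSum S = ∑ σ : Equiv.Perm (Fin N), (Equiv.Perm.sign σ : ℤ) •
      ∏ i, S (σ (stdPair hN (i, 0))) (σ (stdPair hN (i, 1))) := by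
  refine Finset.sum_congr rfl fun σ _ => ?_
  congr 1
  refine Finset.prod_congr rfl fun i _ => ?_
  congr 2 <;> (ext; simp [stdPair, finProdFinEquiv, add_comm])

lemma pfSum_conj (hN : N / 2 * 2 = N) (S B : Matrix (Fin N) (Fin N) R) :
    pfSum (B * S * Bᵀ) = det B * pfSum S := by
  have key : ∀ σ : Equiv.Perm (Fin N),
      ∏ i, (B * S * Bᵀ) (σ (stdPair hN (i, 0))) (σ (stdPair hN (i, 1)))
      = ∑ G : Fin N → Fin N, (∏ i, S (G (stdPair hN (i, 0))) (G (stdPair hN (i, 1))))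
          * ∏ j, B (σ j) (G j) := by
    intro σ
    have h1 : ∀ u v, (B * S * Bᵀ) u v
        = ∑ x : Fin 2 → Fin N, B u (x 0) * S (x 0) (x 1) * B v (x 1) := by
      intro u v
      rw [← (finTwoArrowEquiv (Fin N)).symm.sum_comp, Fintype.sum_prod_type, Finset.sum_comm]
      simp [Matrix.mul_apply, Finset.sum_mul, finTwoArrowEquiv]
    simp only [h1]
    rw [Finset.prod_univ_sum, Fintype.piFinset_univ]
    rw [← ((Equiv.curry _ _ _).symm.trans
      (Equiv.arrowCongr (stdPair hN) (Equiv.refl (Fin N)))).sum_comp]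
    refine Finset.sum_congr rfl fun x _ => ?_
    rw [← (stdPair hN).prod_comp, Fintype.prod_prod_type, ← Finset.prod_mul_distrib]
    refine Finset.prod_congr rfl fun i _ => ?_
    simp [Equiv.arrowCongr, Fin.prod_univ_two]
    ring
  rw [pfSum_eq hN]
  simp only [key, Finset.smul_sum]
  rw [Finset.sum_comm]
  have h2 : ∀ G : Fin N → Fin N,
      ∑ σ : Equiv.Perm (Fin N), (Equiv.Perm.sign σ : ℤ) •
        ((∏ i, S (G (stdPair hN (i, 0))) (G (stdPair hN (i, 1)))) * ∏ j, B (σ j) (G j))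
      = (∏ i, S (G (stdPair hN (i, 0))) (G (stdPair hN (i, 1)))) * det (B.submatrix id G) := by
    intro G
    rw [det_apply, Finset.mul_sum]
    refine Finset.sum_congr rfl fun σ _ => ?_
    rw [mul_smul_comm]
    rfl
  simp only [h2]
  rw [pfSum_eq hN, Finset.mul_sum]
  refine (Fintype.sum_of_injective (fun σ : Equiv.Perm (Fin N) => (σ : Fin N → Fin N))
    Equiv.coe_fn_injective _ _ ?_ ?_).symm
  · intro G hG
    have : ¬ Function.Injective G := fun hi =>
      hG ⟨Equiv.ofBijective G (Finite.injective_iff_bijective.mp hi), rfl⟩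
    simp only [Function.Injective, not_forall] at this
    obtain ⟨i, j, hij, hne⟩ := this
    rw [det_zero_of_column_eq hne (by simp [hij]), mul_zero]
  · intro σ
    rw [det_permute', zsmul_eq_mul]
    ring

end pfaffian

/-! ### Invariance -/

section invariance

variable {F : Type*} [Field F] {N : ℕ}

/-- The commutator `[A, M]` with the generic skew-symmetric matrix. -/
def genComm (A : Matrix (Fin N) (Fin N) F) : Matrix (Fin N) (Fin N) (MvPolynomial (SkewIx N) F) :=
  A.map C * genSkew N - genSkew N * A.map C

/-- `soDeriv A` as a derivation. -/
def soDerivation (A : Matrix (Fin N) (Fin N) F) :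
    Derivation F (MvPolynomial (SkewIx N) F) (MvPolynomial (SkewIx N) F) :=
  ∑ v : SkewIx N, genComm A v.1.1 v.1.2 • pderiv v

lemma derivation_sum_apply {ι R : Type*} [CommRing R] [Algebra F R] (s : Finset ι)
    (d : ι → Derivation F R R) (p : R) : (∑ v ∈ s, d v) p = ∑ v ∈ s, d v p := by
  classical
  induction s using Finset.induction_on with
  | empty => simp
  | insert a s ha ih => simp [Finset.sum_insert ha, ih]

lemma soDerivation_apply (A : Matrix (Fin N) (Fin N) F) (p : MvPolynomial (SkewIx N) F) :
    soDerivation A p = soDeriv A p := by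
  rw [soDerivation, soDeriv, derivation_sum_apply]
  exact Finset.sum_congr rfl fun v _ => mul_comm _ _

lemma soDeriv_X (A : Matrix (Fin N) (Fin N) F) (v : SkewIx N) :
    soDeriv A (X v) = genComm A v.1.1 v.1.2 := by
  rw [soDeriv, Finset.sum_eq_single v]
  · rw [pderiv_X_self, one_mul]; rfl
  · intro w _ hw
    rw [pderiv_X_of_ne hw.symm, zero_mul]
  · simp

lemma comm_transpose {A : Matrix (Fin N) (Fin N) F} (hA : Aᵀ = -A) : (genComm A)ᵀ = -genComm A := by
  have h : (A.map (C : F → MvPolynomial (SkewIx N) F))ᵀ = -A.map C := by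
    rw [← Matrix.transpose_map, hA]
    ext1 i j
    simp
  rw [genComm, transpose_sub, transpose_mul, transpose_mul, genSkew_transpose, h]
  simp

lemma diag_eq_zero_of_skew {R : Type*} [CommRing R] [IsDomain R] [CharZero R]
    {S : Matrix (Fin N) (Fin N) R} (h : Sᵀ = -S) (i : Fin N) : S i i = 0 := by
  have := congrFun (congrFun h i) i
  simpa [self_eq_neg] using this

open DualNumber in
lemma evalAt_dualNumber [CharZero F] {A : Matrix (Fin N) (Fin N) F}
    (p : MvPolynomial (SkewIx N) F) :
    evalAt ((genSkew N).map TrivSqZeroExt.inl + (genComm A).map TrivSqZeroExt.inr :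
      Matrix (Fin N) (Fin N) (DualNumber (MvPolynomial (SkewIx N) F))) p
    = TrivSqZeroExt.inl p + TrivSqZeroExt.inr (soDeriv A p) := by
  induction p using MvPolynomial.induction_on with
  | C a =>
    rw [← soDerivation_apply, ← algebraMap_eq, Derivation.map_algebraMap, AlgHom.commutes]
    simp [TrivSqZeroExt.algebraMap_eq_inl']
  | add p q hp hq =>
    rw [map_add, hp, hq, ← soDerivation_apply, ← soDerivation_apply, ← soDerivation_apply, map_add]
    simp only [TrivSqZeroExt.inl_add, TrivSqZeroExt.inr_add]
    ring
  | mul_X p v hp =>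
    rw [map_mul, hp, evalAt_X, Matrix.add_apply, Matrix.map_apply, Matrix.map_apply, ← soDerivation_apply, ← soDerivation_apply, Derivation.leibniz,
      soDerivation_apply A (X v), soDeriv_X]
    have : (genSkew (𝕜 := F) N v.1.1 v.1.2) = X v := by
      have := v.2
      simp only [genSkew, dif_pos this]
      rfl
    rw [this]
    ext <;> simp [mul_comm, add_comm]

/-- A polynomial whose value at the generic skew-symmetric matrix `S` is unchanged by
`S ↦ g S gᵀ`, for all `g` over the dual numbers with `g gᵀ = 1` and `det g = 1`, is annihilated by
the vector fields of `so_N`: apply the invariance to `g = 1 + ε A`. -/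
lemma soDeriv_eq_zero_of_conj [CharZero F] {A : Matrix (Fin N) (Fin N) F} (hA : Aᵀ = -A)
    (p : MvPolynomial (SkewIx N) F)
    (hp : ∀ g : Matrix (Fin N) (Fin N) (DualNumber (MvPolynomial (SkewIx N) F)),
      g * gᵀ = 1 → det g = 1 →
      evalAt (g * (genSkew N).map TrivSqZeroExt.inl * gᵀ) p
        = evalAt ((genSkew N).map TrivSqZeroExt.inl) p) :
    soDeriv A p = 0 := by
  let A' : Matrix (Fin N) (Fin N) (DualNumber (MvPolynomial (SkewIx N) F)) :=
    A.map (algebraMap F (DualNumber (MvPolynomial (SkewIx N) F)))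
  let ε : DualNumber (MvPolynomial (SkewIx N) F) := DualNumber.eps
  have hε : ε * ε = 0 := DualNumber.eps_mul_eps
  have hA' : A'ᵀ = -A' := by
    change (A.map (algebraMap F (DualNumber (MvPolynomial (SkewIx N) F))))ᵀ = _
    rw [← Matrix.transpose_map, hA]
    ext1 i j
    simp [A']
  have htr : A'.trace = 0 := by
    simp only [Matrix.trace, Matrix.diag, A', Matrix.map_apply, diag_eq_zero_of_skew hA, map_zero,
      Finset.sum_const_zero]
  have hgT : (1 + ε • A')ᵀ = 1 - ε • A' := by
    rw [transpose_add, transpose_smul, hA', transpose_one, smul_neg, sub_eq_add_neg]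
  -- `g gᵀ = 1` because `ε² = 0`, and `det g = 1 + ε tr A = 1`.
  have hconj := hp (1 + ε • A') (by
      rw [hgT, add_mul, mul_sub, mul_sub, one_mul, mul_one, one_mul, smul_mul_smul_comm, hε]
      simp) (by
      rw [det_one_add_smul, htr, pow_two, hε]; simp)
  have hS : (1 + ε • A') * (genSkew (𝕜 := F) N).map TrivSqZeroExt.inl * (1 + ε • A')ᵀ
      = ((genSkew N).map TrivSqZeroExt.inl + (genComm A).map TrivSqZeroExt.inr :
        Matrix (Fin N) (Fin N) (DualNumber (MvPolynomial (SkewIx N) F))) := by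
    rw [hgT]
    have e1 : (1 + ε • A') * (genSkew (𝕜 := F) N).map TrivSqZeroExt.inl * (1 - ε • A')
        = (genSkew (𝕜 := F) N).map TrivSqZeroExt.inl
        + ε • (A' * (genSkew (𝕜 := F) N).map TrivSqZeroExt.inl
          - (genSkew (𝕜 := F) N).map TrivSqZeroExt.inl * A') := by
      rw [add_mul, mul_sub, mul_one, add_mul, one_mul, smul_mul_assoc, smul_mul_smul_comm, hε,
        mul_smul_comm, smul_sub]
      simp
      abel
    rw [e1]
    ext1 i j
    simp only [Matrix.add_apply, Matrix.map_apply, Matrix.smul_apply, Matrix.sub_apply, genComm,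
      Matrix.mul_apply, A', ε]
    ext <;> simp [TrivSqZeroExt.algebraMap_eq_inl', TrivSqZeroExt.fst_sum, TrivSqZeroExt.snd_sum]
  rw [hS, evalAt_dualNumber] at hconj
  have h0 : genComm (0 : Matrix (Fin N) (Fin N) F) = 0 := by
    have : (0 : Matrix (Fin N) (Fin N) F).map (C : F → MvPolynomial (SkewIx N) F) = 0 := by
      ext1 i j; simp
    simp [genComm, this]
  have hid := evalAt_dualNumber (A := 0) p
  have hz : soDeriv (0 : Matrix (Fin N) (Fin N) F) p = 0 := by
    have : soDerivation (0 : Matrix (Fin N) (Fin N) F) = 0 := by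
      simp [soDerivation, h0]
    rw [← soDerivation_apply, this]; rfl
  rw [h0, hz] at hid
  have h0' : (0 : Matrix (Fin N) (Fin N) (MvPolynomial (SkewIx N) F)).map TrivSqZeroExt.inr
      = (0 : Matrix (Fin N) (Fin N) (DualNumber (MvPolynomial (SkewIx N) F))) := by
    ext1 i j; simp
  rw [h0', add_zero, TrivSqZeroExt.inr_zero, add_zero] at hid
  have hconj' := hconj.trans hid
  simpa using congrArg TrivSqZeroExt.snd hconj'

end invariance

lemma soBasicInv_invariant {F : Type*} [Field F] [CharZero F] (m n : ℕ)
    (A : Matrix (Fin (m + n)) (Fin (m + n)) F) (hA : Aᵀ = -A) (i : Fin ((m + n) / 2)) :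
    soDeriv A (soBasicInv (𝕜 := F) m n i) = 0 := by
  apply soDeriv_eq_zero_of_conj hA
  intro g hg hdet
  set S : Matrix (Fin (m + n)) (Fin (m + n)) (DualNumber (MvPolynomial (SkewIx (m + n)) F)) :=
    (genSkew (m + n)).map TrivSqZeroExt.inl with hSdef
  have hS : ∀ i j, S i j = -S j i := fun i j => by
    simp only [hSdef, Matrix.map_apply]
    rw [genSkew_neg, TrivSqZeroExt.inl_neg]
  have hd : ∀ i, S i i = 0 := fun i => by simp [hSdef, genSkew_diag]
  have hS' : ∀ i j, (g * S * gᵀ) i j = -(g * S * gᵀ) j i := fun i j => by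
    have hT : Sᵀ = -S := by ext1 i j; exact hS j i
    have : (g * S * gᵀ)ᵀ = -(g * S * gᵀ) := by
      rw [transpose_mul, transpose_mul, transpose_transpose, hT]
      simp [mul_assoc]
    exact congrFun (congrFun this j) i
  have hd' : ∀ i, (g * S * gᵀ) i i = 0 := fun i => by
    have h2 : (2 : F) • (g * S * gᵀ) i i = 0 := by
      rw [two_smul]
      nth_rewrite 1 [hS' i i]
      simp
    exact (smul_eq_zero.mp h2).resolve_left two_ne_zero
  rw [soBasicInv]
  split_ifs with h
  · rw [evalAt_pfaffianPoly _ hS' hd', evalAt_pfaffianPoly _ hS hd, pfSum_conj (by omega), hdet,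
      one_mul]
  · have e : ∀ T : Matrix (Fin (m + n)) (Fin (m + n)) (DualNumber (MvPolynomial (SkewIx (m + n)) F)),
      (∀ i j, T i j = -T j i) → (∀ i, T i i = 0) →
      evalAt T (principalMinorSum (2 * ((i : ℕ) + 1)) (genSkew (𝕜 := F) (m + n)))
        = principalMinorSum (2 * ((i : ℕ) + 1)) T := by
      intro T h1 h2
      have := map_principalMinorSum (evalAt (F := F) T).toRingHom (2 * ((i : ℕ) + 1))
        (genSkew (m + n))
      simp only [AlgHom.toRingHom_eq_coe, RingHom.coe_coe, map_genSkew T h1 h2] at this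
      exact this
    rw [e _ hS' hd', e _ hS hd, principalMinorSum_conj _ _ _ _ hg]

/-! ### Cartan subspaces -/

/-- A choice of `l` disjoint pairs `e (i, 0) < e (i, 1)` of indices in `Fin N` missing at most one
index. It determines a Cartan subalgebra of `so_N`, spanned by the elementary skew-symmetric
matrices attached to the pairs. -/
structure Pairing (l N : ℕ) where
  /-- The pairs. -/
  e : Fin l × Fin 2 → Fin N
  inj : Function.Injective e
  lt : ∀ i, e (i, 0) < e (i, 1)
  out : ∀ u w, u ∉ Set.range e → w ∉ Set.range e → u = w

namespace Pairing

variable {l N : ℕ} (P : Pairing l N) {R : Type*} [CommRing R]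

/-- The element with coordinates `y` of the Cartan subalgebra given by a pairing. -/
def cartan (y : Fin l → R) : Matrix (Fin N) (Fin N) R :=
  Matrix.of fun u w => ∑ i, ((if P.e (i, 0) = u ∧ P.e (i, 1) = w then y i else 0)
    - (if P.e (i, 1) = u ∧ P.e (i, 0) = w then y i else 0))

lemma cartan_neg (y : Fin l → R) (u w : Fin N) : P.cartan y u w = -P.cartan y w u := by
  simp only [cartan, Matrix.of_apply, ← Finset.sum_neg_distrib, neg_sub, and_comm]

lemma cartan_out (y : Fin l → R) {u : Fin N} (hu : u ∉ Set.range P.e) (w : Fin N) :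
    P.cartan y u w = 0 := by
  rw [cartan, Matrix.of_apply]
  refine Finset.sum_eq_zero fun i _ => ?_
  rw [if_neg, if_neg, sub_zero]
  · exact fun h => hu ⟨_, h.1⟩
  · exact fun h => hu ⟨_, h.1⟩

lemma cartan_out' (y : Fin l → R) {u : Fin N} (hu : u ∉ Set.range P.e) (w : Fin N) :
    P.cartan y w u = 0 := by
  rw [cartan_neg, P.cartan_out y hu, neg_zero]

/-- The standard symplectic form on a plane. -/
def J (R : Type*) [CommRing R] (a b : Fin 2) : R :=
  if a = 0 ∧ b = 1 then 1 else if a = 1 ∧ b = 0 then -1 else 0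

lemma cartan_apply (y : Fin l → R) (i j : Fin l) (a b : Fin 2) :
    P.cartan y (P.e (i, a)) (P.e (j, b)) = if i = j then y i * J R a b else 0 := by
  rw [cartan, Matrix.of_apply, Finset.sum_eq_single i]
  · simp only [P.inj.eq_iff, Prod.mk.injEq, true_and, J]
    by_cases h : i = j
    · subst h
      fin_cases a <;> fin_cases b <;> simp
    · simp [h]
  · intro k _ hk
    simp only [P.inj.eq_iff, Prod.mk.injEq, hk, false_and, if_false, sub_zero]
  · simp

lemma cartan_diag (y : Fin l → R) (u : Fin N) : P.cartan y u u = 0 := by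
  by_cases hu : u ∈ Set.range P.e
  · obtain ⟨⟨i, a⟩, rfl⟩ := hu
    rw [cartan_apply]
    fin_cases a <;> simp [J]
  · exact P.cartan_out y hu u

lemma cartan_map {R' : Type*} [CommRing R'] (f : R →+* R') (y : Fin l → R) :
    (P.cartan y).map f = P.cartan (fun i => f (y i)) := by
  ext u w
  simp only [cartan, Matrix.map_apply, Matrix.of_apply, map_sum, map_sub]
  refine Finset.sum_congr rfl fun i _ => ?_
  congr 1 <;> split_ifs <;> simp

lemma cartan_transpose (y : Fin l → R) : (P.cartan y)ᵀ = -P.cartan y := by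
  ext1 u w
  exact P.cartan_neg y w u

/-- The diagonal entries of `-(cartan y)²`. -/
def sqDiag (y : Fin l → R) (u : Fin N) : R := ∑ i, ∑ a, if P.e (i, a) = u then y i ^ 2 else 0

lemma sqDiag_apply (y : Fin l → R) (i : Fin l) (a : Fin 2) :
    P.sqDiag y (P.e (i, a)) = y i ^ 2 := by
  rw [sqDiag, Finset.sum_eq_single i, Finset.sum_eq_single a]
  · simp
  · intro b _ hb
    rw [if_neg]
    simpa [P.inj.eq_iff] using hb
  · simp
  · intro j _ hj
    refine Finset.sum_eq_zero fun b _ => ?_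
    rw [if_neg]
    simp [P.inj.eq_iff, hj]
  · simp

lemma sqDiag_out (y : Fin l → R) {u : Fin N} (hu : u ∉ Set.range P.e) : P.sqDiag y u = 0 := by
  refine Finset.sum_eq_zero fun i _ => Finset.sum_eq_zero fun a _ => if_neg fun h => hu ⟨_, h⟩

lemma sum_eq_pairs (f : Fin N → R) (hf : ∀ u, u ∉ Set.range P.e → f u = 0) :
    ∑ u, f u = ∑ i, ∑ a, f (P.e (i, a)) := by
  rw [← Fintype.sum_prod_type']
  exact (Fintype.sum_of_injective P.e P.inj _ _ hf fun _ => rfl).symm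

lemma cartan_sq (y : Fin l → R) :
    P.cartan y * P.cartan y = -Matrix.diagonal (P.sqDiag y) := by
  ext u w
  rw [Matrix.mul_apply, Matrix.neg_apply, P.sum_eq_pairs]
  swap
  · intro v hv
    rw [P.cartan_out' y hv, zero_mul]
  by_cases hu : u ∈ Set.range P.e
  · by_cases hw : w ∈ Set.range P.e
    · obtain ⟨⟨i, a⟩, rfl⟩ := hu
      obtain ⟨⟨j, b⟩, rfl⟩ := hw
      rw [Finset.sum_eq_single i]
      · simp only [cartan_apply, Matrix.diagonal_apply, P.inj.eq_iff, Prod.mk.injEq, sqDiag_apply]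
        by_cases h : i = j
        · subst h
          fin_cases a <;> fin_cases b <;> simp [J] <;> ring
        · simp [h]
      · intro k _ hk
        simp [cartan_apply, hk.symm]
      · simp
    · have hne : u ≠ w := by rintro rfl; exact hw hu
      simp [P.cartan_out' y hw, Matrix.diagonal_apply_ne _ hne]
  · rw [Matrix.diagonal_apply]
    simp [P.cartan_out y hu, P.sqDiag_out y hu]

/-- The coordinate on `so_N` attached to the `i`-th pair. -/
def ix (i : Fin l) : SkewIx N := ⟨(P.e (i, 0), P.e (i, 1)), P.lt i⟩

lemma ix_injective : Function.Injective P.ix := by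
  intro i j h
  have : P.e (i, 0) = P.e (j, 0) := congrArg (fun v => v.1.1) h
  exact (Prod.mk.inj (P.inj this)).1

lemma cartan_ix (y : Fin l → R) (i : Fin l) : P.cartan y (P.ix i).1.1 (P.ix i).1.2 = y i := by
  change P.cartan y (P.e (i, 0)) (P.e (i, 1)) = y i
  simp [cartan_apply, J]

lemma cartan_not_ix (y : Fin l → R) (v : SkewIx N) (hv : v ∉ Set.range P.ix) :
    P.cartan y v.1.1 v.1.2 = 0 := by
  rw [cartan, Matrix.of_apply]
  refine Finset.sum_eq_zero fun i _ => ?_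
  rw [if_neg, if_neg, sub_zero]
  · rintro ⟨h1, h2⟩
    have h3 : v.1.1 < v.1.2 := v.2
    rw [← h1, ← h2] at h3
    exact absurd h3 (P.lt i).not_gt
  · rintro ⟨h1, h2⟩
    exact hv ⟨i, Subtype.ext (Prod.ext h1 h2)⟩

/-- Restriction of polynomial functions from `so_N` to the Cartan subalgebra. -/
def res (F : Type*) [Field F] : MvPolynomial (SkewIx N) F →ₐ[F] MvPolynomial (Fin l) F :=
  evalAt (P.cartan X)

/-! ### Injectivity of restriction on invariants -/

section injectivity

variable {F : Type*} [Field F]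

lemma sqDiag_ne {y : Fin l → R} [IsDomain R] (hy0 : ∀ i, y i ≠ 0)
    (hy : ∀ i j, i ≠ j → y i ^ 2 ≠ y j ^ 2) (v : SkewIx N) (hv : v ∉ Set.range P.ix) :
    P.sqDiag y v.1.1 ≠ P.sqDiag y v.1.2 := by
  have hlt : v.1.1 < v.1.2 := v.2
  by_cases h1 : v.1.1 ∈ Set.range P.e
  · obtain ⟨⟨i, a⟩, h1⟩ := h1
    by_cases h2 : v.1.2 ∈ Set.range P.e
    · obtain ⟨⟨j, b⟩, h2⟩ := h2
      rw [← h1, ← h2, sqDiag_apply, sqDiag_apply]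
      apply hy
      rintro rfl
      rw [← h1, ← h2] at hlt
      have := P.lt i
      fin_cases a <;> fin_cases b
      · exact lt_irrefl _ hlt
      · exact hv ⟨i, Subtype.ext (Prod.ext h1 h2)⟩
      · exact absurd hlt this.not_gt
      · exact lt_irrefl _ hlt
    · rw [P.sqDiag_out y h2, ← h1, sqDiag_apply]
      exact pow_ne_zero 2 (hy0 i)
  · by_cases h2 : v.1.2 ∈ Set.range P.e
    · rw [P.sqDiag_out y h1]
      obtain ⟨⟨j, b⟩, h2⟩ := h2
      rw [← h2, sqDiag_apply]
      exact (pow_ne_zero 2 (hy0 j)).symm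
    · exact absurd (P.out _ _ h1 h2) hlt.ne

/-- A skew-symmetric matrix with entries `g` above the diagonal. -/
def skewOf (g : SkewIx N → R) : Matrix (Fin N) (Fin N) R :=
  Matrix.of fun i j => if h : i < j then g ⟨(i, j), h⟩ else if h' : j < i then -g ⟨(j, i), h'⟩ else 0

lemma skewOf_ix (g : SkewIx N → R) (v : SkewIx N) : skewOf g v.1.1 v.1.2 = g v := by
  have h : v.1.1 < v.1.2 := v.2
  rw [skewOf, Matrix.of_apply, dif_pos h]
  rfl

lemma skewOf_transpose (g : SkewIx N → R) : (skewOf g)ᵀ = -skewOf g := by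
  ext1 i j
  simp only [skewOf, Matrix.transpose_apply, Matrix.of_apply, Matrix.neg_apply]
  rcases lt_trichotomy i j with h | h | h
  · simp [h, h.not_gt]
  · simp [h]
  · simp [h, h.not_gt]

lemma trace_skewOf (g : SkewIx N → R) (B : Matrix (Fin N) (Fin N) R) (hB : Bᵀ = -B) :
    (skewOf g * B).trace = -(2 * ∑ v, g v * B v.1.1 v.1.2) := by
  have hsw : ∀ i j, B j i = -B i j := fun i j => congrFun (congrFun hB i) j
  have h1 : (skewOf g * B).trace
      = ∑ x : Fin N × Fin N, ((if h : x.1 < x.2 then -(g ⟨x, h⟩ * B x.1 x.2) else 0)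
        + (if h : x.2 < x.1 then -(g ⟨(x.2, x.1), h⟩ * B x.2 x.1) else 0)) := by
    rw [Fintype.sum_prod_type]
    simp only [Matrix.trace, Matrix.diag, Matrix.mul_apply, skewOf, Matrix.of_apply]
    refine Finset.sum_congr rfl fun i _ => Finset.sum_congr rfl fun j _ => ?_
    rcases lt_trichotomy i j with h | h | h
    · simp [h, h.not_gt, hsw i j]
    · simp [h]
    · simp [h, h.not_gt]
  have h2 : ∑ x : Fin N × Fin N, (if h : x.1 < x.2 then -(g ⟨x, h⟩ * B x.1 x.2) else 0)
      = -∑ v, g v * B v.1.1 v.1.2 := by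
    rw [← Finset.sum_neg_distrib]
    refine (Fintype.sum_of_injective (fun v : SkewIx N => v.1) Subtype.val_injective _ _ ?_ ?_).symm
    · intro x hx
      rw [dif_neg]
      exact fun h => hx ⟨⟨x, h⟩, rfl⟩
    · intro v
      have : v.1.1 < v.1.2 := v.2
      rw [dif_pos this]
      rfl
  rw [h1, Finset.sum_add_distrib, h2, ← (Equiv.prodComm (Fin N) (Fin N)).sum_comp]
  simp only [Equiv.prodComm_apply, Prod.fst_swap, Prod.snd_swap, Prod.mk.eta]
  erw [h2]
  ring

/-- A gradient that is orthogonal to every `[A, t]`, with `t` a regular element of the Cartan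
subalgebra, vanishes in all directions transversal to it: such a gradient commutes with `t`, hence
with the diagonal matrix `t²`. -/
lemma gradient_eq_zero [IsDomain R] [CharZero R] [Algebra F R] {y : Fin l → R}
    (hy0 : ∀ i, y i ≠ 0) (hy : ∀ i j, i ≠ j → y i ^ 2 ≠ y j ^ 2) (g : SkewIx N → R)
    (hg : ∀ A : Matrix (Fin N) (Fin N) F, Aᵀ = -A →
      ∑ v, g v * (A.map (algebraMap F R) * P.cartan y - P.cartan y * A.map (algebraMap F R))
        v.1.1 v.1.2 = 0)
    (v : SkewIx N) (hv : v ∉ Set.range P.ix) : g v = 0 := by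
  set t := P.cartan y with ht
  set G := skewOf g with hG
  -- The trace form turns orthogonality to all `[A, t]` into `[t, G] = 0`; its entries are read off
  -- from elementary skew-symmetric `A`.
  have hcomm : t * G - G * t = 0 := by
    ext1 a b
    let A : Matrix (Fin N) (Fin N) F := Matrix.single a b 1 - Matrix.single b a 1
    have hA : Aᵀ = -A := by simp [A]
    have hAm : A.map (algebraMap F R) = Matrix.single a b 1 - Matrix.single b a 1 := by
      ext i j
      simp only [A, Matrix.map_apply, Matrix.sub_apply, Matrix.single_apply, map_sub]
      split_ifs <;> simp
    have hB : (A.map (algebraMap F R) * t - t * A.map (algebraMap F R))ᵀ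
        = -(A.map (algebraMap F R) * t - t * A.map (algebraMap F R)) := by
      rw [transpose_sub, transpose_mul, transpose_mul, ← Matrix.transpose_map, hA, ht,
        cartan_transpose]
      have : (-A).map (algebraMap F R) = -A.map (algebraMap F R) := by ext i j; simp
      rw [this]
      simp
    have h := trace_skewOf g _ hB
    rw [hg A hA, mul_zero, neg_zero, ← hG, mul_sub, trace_sub, ← mul_assoc, ← mul_assoc,
      trace_mul_comm (G * A.map _) t, ← mul_assoc, ← trace_sub, ← sub_mul, hAm] at h
    have hM : (t * G - G * t)ᵀ = -(t * G - G * t) := by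
      rw [transpose_sub, transpose_mul, transpose_mul, ht, cartan_transpose, hG, skewOf_transpose]
      simp
    have hM' : (t * G - G * t) b a = -(t * G - G * t) a b := congrFun (congrFun hM a) b
    rw [mul_sub, trace_sub, Matrix.trace_mul_single, Matrix.trace_mul_single, hM'] at h
    rw [MulOpposite.op_one, one_smul, one_smul] at h
    have h2 : (2 : R) * (t * G - G * t) a b = 0 := by linear_combination -h
    simpa using h2
  have hsq : Matrix.diagonal (P.sqDiag y) * G = G * Matrix.diagonal (P.sqDiag y) := by
    have h1 : t * G = G * t := sub_eq_zero.mp hcomm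
    have h2 : (t * t) * G = G * (t * t) := by rw [mul_assoc, h1, ← mul_assoc, h1, mul_assoc]
    rw [ht, P.cartan_sq y, neg_mul, mul_neg, neg_inj] at h2
    exact h2
  have h3 := congrFun (congrFun hsq v.1.1) v.1.2
  rw [Matrix.diagonal_mul, Matrix.mul_diagonal, hG, skewOf_ix] at h3
  have h4 : (P.sqDiag y v.1.1 - P.sqDiag y v.1.2) * g v = 0 := by linear_combination h3
  exact (mul_eq_zero.mp h4).resolve_left (sub_ne_zero.mpr (P.sqDiag_ne hy0 hy v hv))

end injectivity
end Pairing

lemma evalAt_comp {F : Type*} [Field F] {N : ℕ} {R R' : Type*} [CommRing R] [Algebra F R]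
    [CommRing R'] [Algebra F R'] (f : R →ₐ[F] R') (S : Matrix (Fin N) (Fin N) R)
    (p : MvPolynomial (SkewIx N) F) : f (evalAt S p) = evalAt (S.map f) p := by
  have h : f.comp (evalAt S) = evalAt (S.map f) := by
    apply MvPolynomial.algHom_ext
    intro v
    rw [AlgHom.comp_apply, evalAt_X, evalAt_X, Matrix.map_apply]
  exact DFunLike.congr_fun h p

lemma genSkew_ix {F : Type*} [Field F] {N : ℕ} (v : SkewIx N) :
    genSkew (𝕜 := F) N v.1.1 v.1.2 = X v := by
  have h : v.1.1 < v.1.2 := v.2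
  rw [genSkew, dif_pos h]
  rfl

lemma evalAt_genSkew {F : Type*} [Field F] {N : ℕ} (p : MvPolynomial (SkewIx N) F) :
    evalAt (genSkew N) p = p := by
  have h : evalAt (F := F) (genSkew (𝕜 := F) N) = AlgHom.id F _ := by
    apply MvPolynomial.algHom_ext
    intro v
    rw [evalAt_X, genSkew_ix, AlgHom.id_apply]
  rw [h, AlgHom.id_apply]

/-- A derivation applied to the coefficients of a polynomial. -/
def coeffDer {F R : Type*} [Field F] [CommRing R] [Algebra F R] (d : Derivation F R R) :
    Derivation F (Polynomial R) (Polynomial R) :=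
  PolynomialModule.equivPolynomialSelf.compDer d.mapCoeffs

lemma coeff_coeffDer {F R : Type*} [Field F] [CommRing R] [Algebra F R] (d : Derivation F R R)
    (p : Polynomial R) (i : ℕ) : (coeffDer d p).coeff i = d (p.coeff i) := rfl

lemma coeffDer_mul_X_pow {F R : Type*} [Field F] [CommRing R] [Algebra F R] (d : Derivation F R R)
    (a : R) (k : ℕ) :
    coeffDer d (Polynomial.C a * Polynomial.X ^ k) = Polynomial.C (d a) * Polynomial.X ^ k := by
  ext i
  rw [coeff_coeffDer, Polynomial.coeff_C_mul_X_pow, Polynomial.coeff_C_mul_X_pow]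
  split_ifs <;> simp

lemma coeff_mul_of_coeff_lt {R : Type*} [CommRing R] (a b : Polynomial R) (r : ℕ)
    (h : ∀ k < r, a.coeff k = 0) : (a * b).coeff r = a.coeff r * b.coeff 0 := by
  rw [Polynomial.coeff_mul, Finset.sum_eq_single (r, 0)]
  · rintro ⟨i, j⟩ hij hne
    replace hij : i + j = r := by simpa using hij
    have : i < r := by
      rcases Nat.eq_zero_or_pos j with hj | hj
      · exact absurd (by ext <;> simp <;> omega) hne
      · omega
    simp [h i this]
  · simp

namespace Pairing

variable {l N : ℕ} (P : Pairing l N) {F : Type*} [Field F]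

/-- The generic element of the Cartan subalgebra, in the coordinates of `so_N`. -/
def torus (F : Type*) [Field F] : Matrix (Fin N) (Fin N) (MvPolynomial (SkewIx N) F) :=
  P.cartan fun i => X (P.ix i)

/-- The generic skew-symmetric matrix with its part transversal to the Cartan subalgebra scaled by
a parameter. -/
def scaled (F : Type*) [Field F] :
    Matrix (Fin N) (Fin N) (Polynomial (MvPolynomial (SkewIx N) F)) :=
  (P.torus F).map Polynomial.C
    + (Polynomial.X : Polynomial (MvPolynomial (SkewIx N) F)) •
      (genSkew N - P.torus F).map Polynomial.C

open Classical in
/-- The degree in the parameter of the coordinates of `Pairing.scaled`. -/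
def scaleDeg (v : SkewIx N) : ℕ := if v ∈ Set.range P.ix then 0 else 1

lemma scaled_apply (i j : Fin N) : P.scaled F i j = Polynomial.C (P.torus F i j)
    + Polynomial.X * Polynomial.C (genSkew N i j - P.torus F i j) := rfl

lemma scaled_ix (v : SkewIx N) :
    P.scaled F v.1.1 v.1.2 = Polynomial.C (X v) * Polynomial.X ^ P.scaleDeg v := by
  rw [scaled_apply, genSkew_ix]
  by_cases h : v ∈ Set.range P.ix
  · have hd : P.scaleDeg v = 0 := if_pos h
    rw [hd]
    obtain ⟨i, rfl⟩ := h
    have : P.torus F (P.ix i).1.1 (P.ix i).1.2 = X (P.ix i) := P.cartan_ix _ i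
    rw [this]
    simp
  · have hd : P.scaleDeg v = 1 := if_neg h
    rw [hd, torus, P.cartan_not_ix _ v h, sub_zero, map_zero, zero_add, pow_one, mul_comm]

lemma scaled_neg (i j : Fin N) : P.scaled F i j = -P.scaled F j i := by
  rw [scaled_apply, scaled_apply, genSkew_neg i j, torus, P.cartan_neg _ i j]
  simp only [map_neg, map_sub]
  ring

lemma scaled_diag (i : Fin N) : P.scaled F i i = 0 := by
  rw [scaled_apply, genSkew_diag, torus, P.cartan_diag]
  simp

lemma coeffDer_scaled (p : MvPolynomial (SkewIx N) F) (v : SkewIx N) :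
    coeffDer (pderiv v) (evalAt (P.scaled F) p)
      = evalAt (P.scaled F) (pderiv v p) * Polynomial.X ^ P.scaleDeg v := by
  rw [derivation_evalAt, Finset.sum_eq_single v]
  · rw [scaled_ix, coeffDer_mul_X_pow, pderiv_X_self, map_one, one_mul]
  · intro w _ hw
    rw [scaled_ix, coeffDer_mul_X_pow, pderiv_X_of_ne hw, map_zero, zero_mul, mul_zero]
  · simp

lemma euler_scaled (p : MvPolynomial (SkewIx N) F) :
    Polynomial.X * Polynomial.derivative (evalAt (P.scaled F) p)
      = ∑ v, (P.scaleDeg v : Polynomial (MvPolynomial (SkewIx N) F)) *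
        (coeffDer (pderiv v) (evalAt (P.scaled F) p) * Polynomial.C (X v)) := by
  have h := derivation_evalAt
    ((Polynomial.derivative' (R := MvPolynomial (SkewIx N) F)).restrictScalars F) (P.scaled F) p
  have h' : Polynomial.derivative (evalAt (P.scaled F) p) = _ := h
  rw [h', Finset.mul_sum]
  refine Finset.sum_congr rfl fun v _ => ?_
  have h2 : (Polynomial.derivative'.restrictScalars F) (P.scaled F v.1.1 v.1.2)
      = Polynomial.derivative (Polynomial.C (X v) * Polynomial.X ^ P.scaleDeg v) := by
    rw [← scaled_ix]; rfl
  rw [h2, coeffDer_scaled]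
  by_cases hv : v ∈ Set.range P.ix
  · have hd : P.scaleDeg v = 0 := if_pos hv
    simp [hd]
  · have hd : P.scaleDeg v = 1 := if_neg hv
    simp only [hd, pow_one, Polynomial.derivative_mul, Polynomial.derivative_C,
      Polynomial.derivative_X, Nat.cast_one]
    ring

lemma coeff_zero_scaled (p : MvPolynomial (SkewIx N) F) :
    (evalAt (P.scaled F) p).coeff 0 = aeval (fun i => X (P.ix i)) (P.res F p) := by
  have h1 := evalAt_comp ((Polynomial.aeval (R := MvPolynomial (SkewIx N) F)
      (0 : MvPolynomial (SkewIx N) F)).restrictScalars F)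
    (P.scaled F) p
  rw [Polynomial.coeff_zero_eq_aeval_zero]
  refine Eq.trans h1 ?_
  rw [res, evalAt_comp]
  congr 2
  ext1 i j
  have h2 : (P.cartan X).map (aeval (fun i => X (P.ix i)) :
      MvPolynomial (Fin l) F →ₐ[F] MvPolynomial (SkewIx N) F) = P.torus F := by
    refine (P.cartan_map (aeval (fun i => X (P.ix i)) :
      MvPolynomial (Fin l) F →ₐ[F] MvPolynomial (SkewIx N) F).toRingHom X).trans ?_
    simp [torus]
  rw [h2, Matrix.map_apply, scaled_apply]
  simp

lemma eval_one_scaled (p : MvPolynomial (SkewIx N) F) :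
    (evalAt (P.scaled F) p).eval 1 = p := by
  have h1 := evalAt_comp ((Polynomial.aeval (R := MvPolynomial (SkewIx N) F)
      (1 : MvPolynomial (SkewIx N) F)).restrictScalars F)
    (P.scaled F) p
  rw [← Polynomial.coe_aeval_eq_eval]
  refine Eq.trans h1 (Eq.trans ?_ (evalAt_genSkew p))
  congr 2
  ext1 i j
  rw [Matrix.map_apply, scaled_apply]
  simp

/-- An infinitesimally invariant polynomial is determined by its restriction to a Cartan
subalgebra. The coefficients of its expansion in directions transversal to the subalgebra vanish
one after the other: the lowest nonzero one has zero transversal gradient, contradicting Euler's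
identity. -/
lemma eq_zero_of_res [CharZero F] (p : MvPolynomial (SkewIx N) F)
    (hp : ∀ A : Matrix (Fin N) (Fin N) F, Aᵀ = -A → soDeriv A p = 0) (h0 : P.res F p = 0) :
    p = 0 := by
  set Θ := evalAt (P.scaled F) p with hΘ
  suffices h : Θ = 0 by rw [← P.eval_one_scaled p, ← hΘ, h, Polynomial.eval_zero]
  ext1 r
  rw [Polynomial.coeff_zero]
  induction r using Nat.strong_induction_on with
  | _ r ih =>
  rcases Nat.eq_zero_or_pos r with hr | hr
  · rw [hr, hΘ, coeff_zero_scaled, h0, map_zero]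
  -- The extra factor `X` makes the transversal and the tangential partial derivatives comparable:
  -- all coefficients of `a v` below `r` vanish by the induction hypothesis.
  let a : SkewIx N → Polynomial (MvPolynomial (SkewIx N) F) := fun v =>
    Polynomial.X * evalAt (P.scaled F) (pderiv v p)
  have ha : ∀ v, a v = coeffDer (pderiv v) Θ * Polynomial.X ^ (1 - P.scaleDeg v) := by
    intro v
    have hd : P.scaleDeg v ≤ 1 := by rw [scaleDeg]; split_ifs <;> simp
    simp only [a]
    rw [hΘ, coeffDer_scaled, mul_assoc, ← pow_add, Nat.add_sub_cancel' hd, pow_one, mul_comm]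
  have hlow : ∀ v, ∀ k < r, (a v).coeff k = 0 := by
    intro v k hk
    rw [ha, Polynomial.coeff_mul_X_pow']
    split_ifs
    · rw [coeff_coeffDer, ih _ (by omega), map_zero]
    · rfl
  have hgrad : ∀ v, v ∉ Set.range P.ix → (a v).coeff r = 0 := by
    refine P.gradient_eq_zero (F := F) (y := fun i => X (P.ix i)) (fun i => X_ne_zero _) ?_
      (fun v => (a v).coeff r) ?_
    · intro i j hij heq
      have := congrArg (eval (Pi.single (P.ix i) 1)) heq
      simp [P.ix_injective.eq_iff, hij.symm] at this
    · intro A hA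
      have h1 : Polynomial.X * evalAt (P.scaled F) (soDeriv A p) = 0 := by
        rw [hp A hA, map_zero, mul_zero]
      rw [soDeriv, map_sum, Finset.mul_sum] at h1
      have h2 := congrArg (fun q => Polynomial.coeff q r) h1
      simp only [Polynomial.finsetSum_coeff, Polynomial.coeff_zero, map_mul, ← mul_assoc] at h2
      rw [← h2]
      refine Finset.sum_congr rfl fun v _ => ?_
      rw [coeff_mul_of_coeff_lt _ _ _ (hlow v)]
      congr 1
      have hC : ∀ i j, (A.map (C : F → MvPolynomial (SkewIx N) F)).map (evalAt (P.scaled F)) i j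
          = Polynomial.C (A.map (algebraMap F (MvPolynomial (SkewIx N) F)) i j) := by
        intro i j
        exact (evalAt (F := F) (P.scaled F)).commutes (A i j)
      have hS : ∀ i j, (evalAt (P.scaled F)) (genSkew (𝕜 := F) N i j) = P.scaled F i j :=
        fun i j => congrFun (congrFun
          (map_genSkew (F := F) (P.scaled F) P.scaled_neg P.scaled_diag) i) j
      have key : ∀ i j, (A.map (algebraMap F (MvPolynomial (SkewIx N) F)) * P.torus F
            - P.torus F * A.map (algebraMap F (MvPolynomial (SkewIx N) F))) i j
          = ((evalAt (P.scaled F)) ((A.map C * genSkew N - genSkew N * A.map C :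
            Matrix (Fin N) (Fin N) (MvPolynomial (SkewIx N) F)) i j)).coeff 0 := by
        intro i j
        have hC' : ∀ i j, (evalAt (P.scaled F)) (A.map (C : F → MvPolynomial (SkewIx N) F) i j)
            = Polynomial.C (A.map (algebraMap F (MvPolynomial (SkewIx N) F)) i j) := hC
        simp only [Matrix.sub_apply, Matrix.mul_apply, map_sub, map_sum, map_mul, hC', hS]
        simp [scaled_apply]
      exact key _ _
  -- Euler's identity expresses `r` times the `r`-th coefficient through transversal derivatives.
  have hE := congrArg (fun q => Polynomial.coeff q r) (P.euler_scaled p)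
  simp only [Polynomial.finsetSum_coeff] at hE
  rw [← hΘ, Finset.sum_eq_zero] at hE
  · obtain ⟨k, rfl⟩ : ∃ k, r = k + 1 := ⟨r - 1, by omega⟩
    rw [Polynomial.coeff_X_mul, Polynomial.coeff_derivative] at hE
    rcases mul_eq_zero.mp hE with h | h
    · exact h
    · exact absurd h (by exact_mod_cast Nat.succ_ne_zero k)
  · intro v _
    by_cases hv : v ∈ Set.range P.ix
    · have hd : P.scaleDeg v = 0 := if_pos hv
      simp [hd]
    · have hd : P.scaleDeg v = 1 := if_neg hv
      have h3 := hgrad v hv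
      rw [ha, hd, Nat.sub_self, pow_zero, mul_one] at h3
      rw [hd, Nat.cast_one, one_mul, Polynomial.coeff_mul_C, h3, zero_mul]

end Pairing

/-! ### Weyl group invariance of restrictions -/

section weyl

variable {N : ℕ} {F : Type*} [Field F]

/-- If `A` acts on the plane spanned by `B` and `B'` as an infinitesimal rotation and fixes `T`,
then an invariant polynomial takes the same value at `T + B` and at `T - B`. Along the plane
`T + bB + cB'` the polynomial `h(b, c)` satisfies `b ∂h/∂c = c ∂h/∂b`, which forces the odd
coefficients in `b` to vanish. -/
lemma evalAt_rotate [CharZero F] {A T B B' : Matrix (Fin N) (Fin N) F} (hA : Aᵀ = -A) (hT : Tᵀ = -T)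
    (hB : Bᵀ = -B) (hB' : B'ᵀ = -B') (lam : F) (hlam : lam ≠ 0) (hAT : A * T - T * A = 0)
    (hAB : A * B - B * A = lam • B') (hAB' : A * B' - B' * A = -lam • B)
    (p : MvPolynomial (SkewIx N) F)
    (hp : ∀ A : Matrix (Fin N) (Fin N) F, Aᵀ = -A → soDeriv A p = 0) :
    evalAt (T + B) p = evalAt (T - B) p := by
  -- The plane `T + bB + cB'` over `F[c][b]`; the outer variable is `b`, and `δ` is the rotation
  -- vector field `lam (b ∂/∂c - c ∂/∂b)`.
  let c : Polynomial (Polynomial F) := Polynomial.C Polynomial.X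
  let b : Polynomial (Polynomial F) := Polynomial.X
  let φ : F →+* Polynomial (Polynomial F) := algebraMap F (Polynomial (Polynomial F))
  let S : Matrix (Fin N) (Fin N) (Polynomial (Polynomial F)) :=
    T.map φ + b • B.map φ + c • B'.map φ
  have hS : ∀ i j, S i j = φ (T i j) + b * φ (B i j) + c * φ (B' i j) := fun i j => rfl
  let h := evalAt (F := F) S p
  let δ : Derivation F (Polynomial (Polynomial F)) (Polynomial (Polynomial F)) :=
    lam • (b • coeffDer (Polynomial.derivative'.restrictScalars F)
      - c • Polynomial.derivative'.restrictScalars F)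
  have hδφ : ∀ x : F, δ (φ x) = 0 := fun x => δ.map_algebraMap x
  have hδ : ∀ q, δ q = lam • (b * coeffDer (Polynomial.derivative'.restrictScalars F) q
      - c * Polynomial.derivative q) := fun q => rfl
  have hδb : δ b = φ lam * -c := by
    rw [hδ, Algebra.smul_def]
    congr 1
    have : coeffDer (F := F) (Polynomial.derivative'.restrictScalars F) b = 0 := by
      have := coeffDer_mul_X_pow (F := F) (Polynomial.derivative'.restrictScalars F)
        (1 : Polynomial F) 1
      simpa using this
    simp [this, b]
  have hδc : δ c = φ lam * b := by
    rw [hδ, Algebra.smul_def]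
    congr 1
    have : coeffDer (F := F) (Polynomial.derivative'.restrictScalars F) c = 1 := by
      have := coeffDer_mul_X_pow (F := F) (Polynomial.derivative'.restrictScalars F)
        (Polynomial.X : Polynomial F) 0
      rw [pow_zero, mul_one, mul_one] at this
      rw [this]
      change Polynomial.C (Polynomial.derivative Polynomial.X) = 1
      simp
    simp [this, c]
  have hskew : ∀ M : Matrix (Fin N) (Fin N) F, Mᵀ = -M → ∀ i j, M i j = -M j i :=
    fun M hM i j => congrFun (congrFun hM j) i
  have h0 : δ h = 0 := by
    have := derivation_evalAt_eq δ S ?_ ?_ A ?_ p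
    · rw [this, hp A hA, map_zero]
    · intro i j
      rw [hS, hS, hskew T hT i j, hskew B hB i j, hskew B' hB' i j]
      simp only [map_neg]
      ring
    · intro i
      rw [hS, diag_eq_zero_of_skew hT, diag_eq_zero_of_skew hB, diag_eq_zero_of_skew hB']
      simp
    · intro i j
      have e1 : A.map φ * S - S * A.map φ
          = (A * T - T * A).map φ + b • (A * B - B * A).map φ + c • (A * B' - B' * A).map φ := by
        simp only [S, Matrix.map_sub φ (map_sub φ), Matrix.map_mul, mul_add, add_mul,
          Matrix.mul_smul, Matrix.smul_mul, smul_sub]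
        abel
      rw [show A.map (algebraMap F (Polynomial (Polynomial F))) = A.map φ from rfl, e1, hAT, hAB,
        hAB', hS]
      simp only [map_add, Derivation.leibniz, hδφ, hδb, hδc, Matrix.add_apply, Matrix.map_apply,
        Matrix.smul_apply, smul_eq_mul, map_mul, Matrix.zero_apply, map_zero, map_neg]
      ring
  have h1 : b * coeffDer (F := F) (Polynomial.derivative'.restrictScalars F) h
      = c * Polynomial.derivative h := by
    rw [hδ] at h0
    exact sub_eq_zero.mp ((smul_eq_zero.mp h0).resolve_left hlam)
  -- Comparing coefficients of `b ^ (j + 1)` in `h1` expresses the `(j + 2)`-nd coefficient of `h`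
  -- through the `c`-derivative of the `j`-th one.
  have hodd : ∀ k, h.coeff (2 * k + 1) = 0 := by
    intro k
    induction k with
    | zero =>
      have := congrArg (fun q => Polynomial.coeff q 0) h1
      simpa [b, c, Polynomial.coeff_derivative] using this
    | succ k ih =>
      have := congrArg (fun q => Polynomial.coeff q (2 * k + 1 + 1)) h1
      simp only [b, c, Polynomial.coeff_X_mul, Polynomial.coeff_C_mul,
        Polynomial.coeff_derivative, coeff_coeffDer, ih, map_zero] at this
      rcases mul_eq_zero.mp this.symm with h2 | h2
      · exact absurd h2 Polynomial.X_ne_zero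
      · rcases mul_eq_zero.mp h2 with h3 | h3
        · exact h3
        · exact absurd h3 (Nat.cast_add_one_ne_zero _)
  have heval : h.eval (-1) = h.eval 1 := by
    rw [Polynomial.eval_eq_sum, Polynomial.eval_eq_sum]
    refine Finset.sum_congr rfl fun i _ => ?_
    rcases Nat.even_or_odd' i with ⟨k, rfl | rfl⟩
    · simp
    · simp [hodd]
  have hspec : ∀ x : Polynomial F, ((h.eval x).eval 0)
      = evalAt (T + x.eval 0 • B) p := by
    intro x
    have := evalAt_comp (((Polynomial.aeval (R := F) (0 : F)).comp
      ((Polynomial.aeval (R := Polynomial F) x).restrictScalars F))) S p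
    refine Eq.trans this ?_
    congr 2
    ext1 i j
    rw [Matrix.map_apply, hS]
    simp only [b, c, φ]
    simp [Polynomial.algebraMap_apply]
    exact mul_comm _ _
  have e1 := hspec 1
  have e2 := hspec (-1)
  rw [heval] at e2
  rw [e1] at e2
  simpa [sub_eq_add_neg] using e2

/-- The matrix of the linear map sending the `a`-th basis vector to the `e a`-th one. -/
def placeMat {ι : Type*} (F : Type*) [Field F] (e : ι → Fin N) : Matrix (Fin N) ι F :=
  Matrix.of fun u a => if e a = u then 1 else 0

/-- The matrix `M`, indexed by `ι`, placed into an `N × N` matrix along `e : ι → Fin N`. -/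
def place {ι : Type*} [Fintype ι] [DecidableEq ι] (e : ι → Fin N) (M : Matrix ι ι F) :
    Matrix (Fin N) (Fin N) F :=
  placeMat F e * M * (placeMat F e)ᵀ

section place

variable {ι : Type*} [Fintype ι] [DecidableEq ι] {e : ι → Fin N}

lemma place_mul (he : Function.Injective e) (M M' : Matrix ι ι F) : place e (M * M') = place e M * place e M' := by
  have h : (placeMat F e)ᵀ * placeMat F e = 1 := by
    ext a b
    simp [placeMat, Matrix.mul_apply, Matrix.one_apply, he.eq_iff, eq_comm]
  simp only [place, ← Matrix.mul_assoc]
  congr 2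
  simp only [Matrix.mul_assoc]
  rw [h, Matrix.mul_one]

lemma place_add (M M' : Matrix ι ι F) : place e (M + M') = place e M + place e M' := by
  simp [place, Matrix.mul_add, Matrix.add_mul]

lemma place_sub (M M' : Matrix ι ι F) : place e (M - M') = place e M - place e M' := by
  simp [place, Matrix.mul_sub, Matrix.sub_mul]

lemma place_smul (c : F) (M : Matrix ι ι F) : place e (c • M) = c • place e M := by
  simp [place]

lemma place_neg (M : Matrix ι ι F) : place e (-M) = -place e M := by
  simp [place]

lemma place_transpose (M : Matrix ι ι F) : (place e M)ᵀ = place e Mᵀ := by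
  simp [place, Matrix.transpose_mul, Matrix.mul_assoc]

lemma place_apply (M : Matrix ι ι F) (u w : Fin N) :
    place e M u w = ∑ b, ∑ a, if e a = u ∧ e b = w then M a b else 0 := by
  simp only [place, placeMat, Matrix.mul_apply, Matrix.of_apply, Matrix.transpose_apply, Finset.sum_mul]
  refine Finset.sum_congr rfl fun b _ => Finset.sum_congr rfl fun a _ => ?_
  by_cases h1 : e a = u <;> by_cases h2 : e b = w <;> simp [h1, h2]

end place

/-- The matrix of the standard symplectic form on a plane. -/
def Jmat (F : Type*) [Field F] : Matrix (Fin 2) (Fin 2) F := !![0, 1; -1, 0]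

open scoped Kronecker

/-- The block-diagonal matrix with blocks `y i • J`, placed along `e`. -/
def blocks {l : ℕ} (e : Fin l × Fin 2 → Fin N) (y : Fin l → F) : Matrix (Fin N) (Fin N) F :=
  place e (Matrix.diagonal y ⊗ₖ Jmat F)

lemma Jmat_transpose : (Jmat F)ᵀ = -Jmat F := by
  ext i j
  fin_cases i <;> fin_cases j <;> simp [Jmat]

lemma place_comm {l : ℕ} {e : Fin l × Fin 2 → Fin N} (he : Function.Injective e)
    (K D : Matrix (Fin l) (Fin l) F) :
    place e (K ⊗ₖ (1 : Matrix (Fin 2) (Fin 2) F)) * place e (D ⊗ₖ Jmat F)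
      - place e (D ⊗ₖ Jmat F) * place e (K ⊗ₖ (1 : Matrix (Fin 2) (Fin 2) F))
    = place e ((K * D - D * K) ⊗ₖ Jmat F) := by
  rw [← place_mul he, ← place_mul he, ← place_sub, ← Matrix.mul_kronecker_mul,
    ← Matrix.mul_kronecker_mul, Matrix.one_mul, Matrix.mul_one]
  congr 1
  ext a b
  simp [Matrix.kroneckerMap_apply, sub_mul]

lemma place_kron_transpose {l : ℕ} {e : Fin l × Fin 2 → Fin N} {D : Matrix (Fin l) (Fin l) F}
    (hD : Dᵀ = D) : (place e (D ⊗ₖ Jmat F))ᵀ = -place e (D ⊗ₖ Jmat F) := by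
  rw [place_transpose, ← Matrix.kroneckerMap_transpose, hD, Jmat_transpose, ← place_neg]
  congr 1
  ext a b
  simp [Matrix.kroneckerMap_apply]

/-- Values of an invariant polynomial on the Cartan subalgebra do not change when two coordinates
are interchanged. -/
lemma evalAt_blocks_swap [CharZero F] {l : ℕ} {e : Fin l × Fin 2 → Fin N} (he : Function.Injective e)
    (p : MvPolynomial (SkewIx N) F)
    (hp : ∀ A : Matrix (Fin N) (Fin N) F, Aᵀ = -A → soDeriv A p = 0) (y : Fin l → F)
    {i k : Fin l} (hik : i ≠ k) :
    evalAt (blocks e y) p = evalAt (blocks e (y ∘ Equiv.swap i k)) p := by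
  -- `K` rotates the coordinates `i` and `k`, so `K ⊗ 1` is skew-symmetric; `y = T + c D` with `T`
  -- fixed by the interchange and `D` changing sign, and `K` rotates `D` into `D'`.
  let K : Matrix (Fin l) (Fin l) F := Matrix.single i k 1 - Matrix.single k i 1
  let D : Matrix (Fin l) (Fin l) F := Matrix.single i i 1 - Matrix.single k k 1
  let D' : Matrix (Fin l) (Fin l) F := Matrix.single i k 1 + Matrix.single k i 1
  let T : Matrix (Fin l) (Fin l) F := Matrix.diagonal fun j => (y j + y (Equiv.swap i k j)) / 2
  let c : F := (y i - y k) / 2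
  have hyj : ∀ j, j ≠ i → j ≠ k → Equiv.swap i k j = j := fun j h1 h2 =>
    Equiv.swap_apply_of_ne_of_ne h1 h2
  have hKD : K * D - D * K = (-2 : F) • D' := by
    simp only [K, D, D', Matrix.sub_mul, Matrix.mul_sub, Matrix.single_mul_single_same,
      mul_one, ne_eq, hik, hik.symm, not_false_eq_true, Matrix.single_mul_single_of_ne]
    module
  have hKD' : K * D' - D' * K = (2 : F) • D := by
    simp only [K, D, D', Matrix.sub_mul, Matrix.mul_sub, Matrix.add_mul, Matrix.mul_add,
      Matrix.single_mul_single_same, mul_one, ne_eq, hik, hik.symm, not_false_eq_true,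
      Matrix.single_mul_single_of_ne]
    module
  have hKT : K * T - T * K = 0 := by
    have h1 : (y i + y k) / 2 = (y k + y i) / 2 := by ring
    ext a b
    simp only [K, T, Matrix.sub_apply, Matrix.mul_diagonal, Matrix.diagonal_mul,
      Matrix.single_apply, Matrix.zero_apply]
    by_cases h2 : i = a ∧ k = b
    · obtain ⟨rfl, rfl⟩ := h2
      simp [hik, hik.symm, h1]
    · by_cases h3 : k = a ∧ i = b
      · obtain ⟨rfl, rfl⟩ := h3
        simp [hik, hik.symm, h1]
      · simp [h2, h3]
  have hK : Kᵀ = -K := by simp [K]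
  have hD : Dᵀ = D := by simp [D]
  have hD' : D'ᵀ = D' := by simp [D', add_comm]
  have hT : Tᵀ = T := by simp [T]
  have key := evalAt_rotate (A := place e (K ⊗ₖ (1 : Matrix (Fin 2) (Fin 2) F)))
    (T := place e (T ⊗ₖ Jmat F)) (B := place e ((c • D) ⊗ₖ Jmat F))
    (B' := place e ((c • D') ⊗ₖ Jmat F)) ?_ ?_ ?_ ?_ (-2) (by norm_num) ?_ ?_ ?_ p hp
  · convert key using 3
    · rw [blocks, ← place_add]
      congr 1
      rw [← Matrix.add_kronecker]
      congr 1
      ext a b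
      by_cases hab : a = b
      · subst hab
        by_cases h1 : a = i
        · subst h1
          simp [T, c, D, hik.symm]
          ring
        · by_cases h2 : a = k
          · subst h2
            simp [T, c, D, hik]
            ring
          · simp [T, D, Ne.symm h1, Ne.symm h2, hyj a h1 h2]
      · have h1 : ¬(i = a ∧ i = b) := fun h => hab (h.1.symm.trans h.2)
        have h2 : ¬(k = a ∧ k = b) := fun h => hab (h.1.symm.trans h.2)
        simp [T, D, Matrix.diagonal_apply_ne _ hab, h1, h2]
    · rw [blocks, ← place_sub]
      congr 1
      have hsub : ∀ X Y : Matrix (Fin l) (Fin l) F,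
          X ⊗ₖ Jmat F - Y ⊗ₖ Jmat F = (X - Y) ⊗ₖ Jmat F := by
        intro X Y
        ext a b
        simp [Matrix.kroneckerMap_apply, sub_mul]
      rw [hsub]
      congr 1
      ext a b
      by_cases hab : a = b
      · subst hab
        by_cases h1 : a = i
        · subst h1
          simp [T, c, D, hik.symm]
          ring
        · by_cases h2 : a = k
          · subst h2
            simp [T, c, D, hik]
            ring
          · simp [T, D, Ne.symm h1, Ne.symm h2, hyj a h1 h2]
      · have h1 : ¬(i = a ∧ i = b) := fun h => hab (h.1.symm.trans h.2)
        have h2 : ¬(k = a ∧ k = b) := fun h => hab (h.1.symm.trans h.2)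
        simp [T, D, Matrix.diagonal_apply_ne _ hab, h1, h2]
  · rw [place_transpose, ← Matrix.kroneckerMap_transpose, hK, Matrix.transpose_one, ← place_neg]
    congr 1
    ext a b
    simp [Matrix.kroneckerMap_apply]
  · exact place_kron_transpose hT
  · exact place_kron_transpose (by rw [Matrix.transpose_smul, hD])
  · exact place_kron_transpose (by rw [Matrix.transpose_smul, hD'])
  · rw [place_comm he, hKT, Matrix.zero_kronecker]
    simp [place]
  · rw [place_comm he, ← place_smul, Matrix.mul_smul, Matrix.smul_mul, ← smul_sub, hKD,
      ← Matrix.smul_kronecker, smul_comm]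
  · rw [place_comm he, ← place_smul, Matrix.mul_smul, Matrix.smul_mul, ← smul_sub, hKD',
      ← Matrix.smul_kronecker, smul_comm, neg_neg]

end weyl

section signs

variable {N : ℕ} {F : Type*} [Field F]

lemma blocks_apply {l : ℕ} (e : Fin l × Fin 2 → Fin N) (y : Fin l → F) (u w : Fin N) :
    blocks e y u w = ∑ i, ((if e (i, 0) = u ∧ e (i, 1) = w then y i else 0)
      - (if e (i, 1) = u ∧ e (i, 0) = w then y i else 0)) := by
  rw [blocks, place_apply, Fintype.sum_prod_type]
  refine Finset.sum_congr rfl fun j _ => ?_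
  simp only [Fintype.sum_prod_type, Fin.sum_univ_two, Matrix.kroneckerMap_apply]
  rw [Finset.sum_eq_single j, Finset.sum_eq_single j]
  · have h00 : Jmat F 0 0 = 0 := rfl
    have h01 : Jmat F 0 1 = 1 := rfl
    have h10 : Jmat F 1 0 = -1 := rfl
    have h11 : Jmat F 1 1 = 0 := rfl
    simp only [Matrix.diagonal_apply_eq, h00, h01, h10, h11, mul_zero, mul_one, mul_neg, ite_self]
    split_ifs <;> ring
  · intro i _ hi
    simp [Matrix.diagonal_apply_ne _ hi]
  · simp
  · intro i _ hi
    simp [Matrix.diagonal_apply_ne _ hi]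
  · simp

/-- The pairs `e`, with the two members of the `k`-th pair interchanged. -/
def flipAt {l : ℕ} (e : Fin l × Fin 2 → Fin N) (k : Fin l) (x : Fin l × Fin 2) : Fin N :=
  e (x.1, if x.1 = k then Equiv.swap 0 1 x.2 else x.2)

lemma flipAt_injective {l : ℕ} {e : Fin l × Fin 2 → Fin N} (he : Function.Injective e)
    (k : Fin l) : Function.Injective (flipAt e k) := by
  rintro ⟨i, a⟩ ⟨j, b⟩ h
  have h1 := he h
  simp only [Prod.mk.injEq] at h1
  obtain ⟨rfl, h2⟩ := h1
  split_ifs at h2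
  · rw [(Equiv.swap 0 1).injective h2]
  · rw [h2]

lemma blocks_flipAt {l : ℕ} (e : Fin l × Fin 2 → Fin N) (k : Fin l) (y : Fin l → F) :
    blocks (flipAt e k) y = blocks e (Function.update y k (-y k)) := by
  ext u w
  rw [blocks_apply, blocks_apply]
  refine Finset.sum_congr rfl fun i _ => ?_
  by_cases h : i = k
  · subst h
    simp only [flipAt, if_true, Equiv.swap_apply_left, Equiv.swap_apply_right,
      Function.update_self]
    split_ifs <;> ring
  · simp [flipAt, h]

namespace Pairing

variable {l : ℕ} (P : Pairing l N)

lemma cartan_eq_blocks (y : Fin l → F) : P.cartan y = blocks P.e y := by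
  ext u w
  rw [blocks_apply, cartan, Matrix.of_apply]

lemma cartan_add (y z : Fin l → F) : P.cartan (y + z) = P.cartan y + P.cartan z := by
  ext u w
  simp only [cartan, Matrix.add_apply, Matrix.of_apply, ← Finset.sum_add_distrib]
  refine Finset.sum_congr rfl fun i _ => ?_
  rw [Pi.add_apply]
  split_ifs <;> ring

lemma cartan_sub (y z : Fin l → F) : P.cartan (y - z) = P.cartan y - P.cartan z := by
  rw [eq_sub_iff_add_eq, ← cartan_add, sub_add_cancel]

lemma cartan_single (i : Fin l) (c : F) :
    P.cartan (Pi.single i c) = c • (Matrix.single (P.e (i, 0)) (P.e (i, 1)) 1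
      - Matrix.single (P.e (i, 1)) (P.e (i, 0)) 1) := by
  ext u w
  rw [cartan, Matrix.of_apply, Finset.sum_eq_single i]
  · simp only [Pi.single_eq_same, Matrix.smul_apply, Matrix.sub_apply, Matrix.single_apply,
      smul_eq_mul, mul_sub, mul_ite, mul_one, mul_zero]
  · intro j _ hj
    simp [hj]
  · simp

variable [CharZero F] (p : MvPolynomial (SkewIx N) F)

lemma evalAt_cartan_swap
    (hp : ∀ A : Matrix (Fin N) (Fin N) F, Aᵀ = -A → soDeriv A p = 0) (y : Fin l → F)
    (i k : Fin l) :
    evalAt (P.cartan (y ∘ Equiv.swap i k)) p = evalAt (P.cartan y) p := by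
  by_cases hik : i = k
  · subst hik; simp
  · rw [cartan_eq_blocks, cartan_eq_blocks]
    exact (evalAt_blocks_swap P.inj p hp y hik).symm

/-- Changing the signs of two coordinates: combine the interchange of the two coordinates with the
one obtained after reversing one of the pairs. -/
lemma evalAt_cartan_neg_neg
    (hp : ∀ A : Matrix (Fin N) (Fin N) F, Aᵀ = -A → soDeriv A p = 0) (y : Fin l → F)
    {i k : Fin l} (hik : i ≠ k) :
    evalAt (P.cartan (Function.update (Function.update y k (-y k)) i (-y i))) p
      = evalAt (P.cartan y) p := by
  have h1 := evalAt_blocks_swap (flipAt_injective P.inj k) p hp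
    (Function.update y k (-y k)) hik
  rw [blocks_flipAt, blocks_flipAt, ← cartan_eq_blocks, ← cartan_eq_blocks,
    eq_comm, ← evalAt_cartan_swap P p hp _ i k] at h1
  convert h1 using 3
  · congr 1
    ext j
    by_cases h2 : j = i
    · subst h2
      simp [hik]
    · by_cases h3 : j = k
      · subst h3
        simp [hik, hik.symm]
      · simp [h2, h3, Equiv.swap_apply_of_ne_of_ne h2 h3]
  · simp

/-- Changing the sign of one coordinate, by a rotation involving an unpaired index. -/
lemma evalAt_cartan_neg
    (hp : ∀ A : Matrix (Fin N) (Fin N) F, Aᵀ = -A → soDeriv A p = 0) (y : Fin l → F)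
    (i : Fin l) {u : Fin N} (hu : u ∉ Set.range P.e) :
    evalAt (P.cartan (Function.update y i (-y i))) p = evalAt (P.cartan y) p := by
  set z := P.e (i, 0) with hz
  set x := P.e (i, 1) with hx
  have hzx : z ≠ x := (P.lt i).ne
  have hzu : z ≠ u := fun h => hu ⟨_, h⟩
  have hxu : x ≠ u := fun h => hu ⟨_, h⟩
  have hT1 : ∀ w, P.cartan (Function.update y i 0) x w = 0 := by
    intro w
    by_cases hw : w ∈ Set.range P.e
    · obtain ⟨⟨j, b⟩, rfl⟩ := hw
      rw [hx, cartan_apply]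
      simp
    · exact P.cartan_out' _ hw _
  have hT1' : ∀ w, P.cartan (Function.update y i 0) w x = 0 := fun w => by
    rw [cartan_neg, hT1, neg_zero]
  have h := evalAt_rotate (A := Matrix.single x u 1 - Matrix.single u x 1)
    (T := P.cartan (Function.update y i 0)) (B := P.cartan (Pi.single i (y i)))
    (B' := y i • (Matrix.single z u 1 - Matrix.single u z 1))
    (by simp) (P.cartan_transpose _) (P.cartan_transpose _)
    (by simp [← smul_neg]) (-1) (by simp)
    ?_ ?_ ?_ p hp
  · rw [← cartan_add, ← cartan_sub] at h
    convert h.symm using 3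
    · congr 1
      ext j
      by_cases h2 : j = i
      · subst h2; simp
      · simp [h2]
    · congr 1
      ext j
      by_cases h2 : j = i
      · subst h2; simp
      · simp [h2]
  · ext a b
    simp [Matrix.mul_apply, Matrix.single_apply, ite_and, Matrix.sub_mul, Matrix.mul_sub, hT1, hT1',
      P.cartan_out _ hu, P.cartan_out' _ hu, Finset.sum_ite_eq]
  · rw [cartan_single, ← hz, ← hx]
    simp only [Matrix.sub_mul, Matrix.mul_sub, Matrix.mul_smul, Matrix.smul_mul,
      Matrix.single_mul_single_same, mul_one, ne_eq, hzx, hzu, hxu, hzx.symm, hzu.symm, hxu.symm,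
      not_false_eq_true, Matrix.single_mul_single_of_ne]
    module
  · rw [cartan_single, ← hz, ← hx]
    simp only [Matrix.sub_mul, Matrix.mul_sub, Matrix.mul_smul, Matrix.smul_mul,
      Matrix.single_mul_single_same, mul_one, ne_eq, hzx, hzu, hxu, hzx.symm, hzu.symm, hxu.symm,
      not_false_eq_true, Matrix.single_mul_single_of_ne]
    module

end Pairing
end signs

/-! ### Symmetric polynomials with parity conditions -/

section symmetric

variable {l : ℕ} {F : Type*} [Field F]

lemma coeff_scale (ε : Fin l → F) (q : MvPolynomial (Fin l) F) (d : Fin l →₀ ℕ) :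
    coeff d (aeval (fun j => C (ε j) * X j) q : MvPolynomial (Fin l) F)
      = (∏ j, ε j ^ d j) * coeff d q := by
  induction q using MvPolynomial.induction_on' with
  | add p q hp hq => simp only [map_add, coeff_add, hp, hq, mul_add]
  | monomial s a =>
    have : (aeval (fun j => C (ε j) * X j) (monomial s a) : MvPolynomial (Fin l) F)
        = monomial s ((∏ j, ε j ^ s j) * a) := by
      rw [aeval_monomial, monomial_eq, Finsupp.prod_fintype _ _ (by simp),
        Finsupp.prod_fintype _ _ (by simp)]
      simp only [mul_pow, Finset.prod_mul_distrib, map_mul, map_prod, map_pow,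
        MvPolynomial.algebraMap_eq]
      ring
    rw [this, coeff_monomial, coeff_monomial]
    split_ifs with h
    · rw [h]
    · simp

/-- Exponentwise halving (rounding down) of a polynomial. -/
def halve (q : MvPolynomial (Fin l) F) : MvPolynomial (Fin l) F :=
  ∑ d ∈ q.support, monomial (d.mapRange (· / 2) rfl) (coeff d q)

lemma eq_mul_expand_halve (q : MvPolynomial (Fin l) F) (r : ℕ)
    (h : ∀ d ∈ q.support, ∀ i, d i % 2 = r) :
    q = (∏ i, X i) ^ r * expand 2 (halve q) := by
  conv_lhs => rw [q.as_sum]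
  rw [halve, map_sum, Finset.mul_sum]
  refine Finset.sum_congr rfl fun d hd => ?_
  rw [expand_monomial, monomial_eq, monomial_eq, Finsupp.prod_fintype _ _ (by simp),
    Finsupp.prod_fintype _ _ (by simp), mul_left_comm, ← Finset.prod_pow, ← Finset.prod_mul_distrib]
  congr 1
  refine Finset.prod_congr rfl fun i _ => ?_
  rw [← pow_add]
  congr 1
  have := h d hd i
  simp
  omega

lemma halve_isSymmetric (q : MvPolynomial (Fin l) F) (r : ℕ)
    (h : ∀ d ∈ q.support, ∀ i, d i % 2 = r) (hq : q.IsSymmetric) : (halve q).IsSymmetric := by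
  intro e
  have h1 := hq e
  have h0 : ((∏ i, X i) ^ r : MvPolynomial (Fin l) F) ≠ 0 :=
    pow_ne_zero _ (Finset.prod_ne_zero_iff.2 fun i _ => X_ne_zero i)
  nth_rewrite 1 [eq_mul_expand_halve q r h] at h1
  rw [map_mul, map_pow, map_prod, rename_expand] at h1
  simp only [rename_X] at h1
  rw [Equiv.prod_comp e (fun i => (X i : MvPolynomial (Fin l) F))] at h1
  exact expand_injective two_pos
    (mul_left_cancel₀ h0 (h1.trans (eq_mul_expand_halve q r h)))

lemma expand_mem (A : Subalgebra F (MvPolynomial (Fin l) F))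
    (hA : ∀ j : Fin l, expand 2 (esymm (Fin l) F (j + 1)) ∈ A)
    (g : MvPolynomial (Fin l) F) (hg : g.IsSymmetric) : expand 2 g ∈ A := by
  obtain ⟨p, hp⟩ := esymmAlgHom_fin_surjective (R := F) (le_refl l) ⟨g, hg⟩
  have h2 : aeval (fun i : Fin l => esymm (Fin l) F (i + 1)) p = g := by
    rw [← esymmAlgHom_apply, hp]
  rw [← h2, ← AlgHom.comp_apply, comp_aeval]
  refine Algebra.adjoin_le (S := A) (Set.range_subset_iff.2 hA) ?_
  rw [Algebra.adjoin_range_eq_range_aeval]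
  exact ⟨p, rfl⟩

lemma mem_of_even (A : Subalgebra F (MvPolynomial (Fin l) F))
    (hA : ∀ j : Fin l, expand 2 (esymm (Fin l) F (j + 1)) ∈ A)
    (q : MvPolynomial (Fin l) F) (hq : q.IsSymmetric)
    (h : ∀ d ∈ q.support, ∀ i, d i % 2 = 0) : q ∈ A := by
  rw [eq_mul_expand_halve q 0 h, pow_zero, one_mul]
  exact expand_mem A hA _ (halve_isSymmetric q 0 h hq)

/-- Symmetric polynomials with all exponents of a monomial of the same parity: the even part is a
polynomial in the `e_j(y²)`, the odd part is `∏ y_i` times such a polynomial. -/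
lemma mem_of_same_parity (A : Subalgebra F (MvPolynomial (Fin l) F))
    (hA : ∀ j : Fin l, expand 2 (esymm (Fin l) F (j + 1)) ∈ A) (hX : ∏ i, X i ∈ A)
    (q : MvPolynomial (Fin l) F) (hq : q.IsSymmetric)
    (h : ∀ d ∈ q.support, ∀ i j, d i % 2 = d j % 2) : q ∈ A := by
  classical
  let q₀ : MvPolynomial (Fin l) F :=
    ∑ d ∈ q.support.filter (fun d => ∀ i, d i % 2 = 0), monomial d (coeff d q)
  have hc : ∀ d, coeff d q₀ = if ∀ i, d i % 2 = 0 then coeff d q else 0 := by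
    intro d
    simp only [q₀, coeff_sum, coeff_monomial, Finset.sum_ite_eq', Finset.mem_filter,
      mem_support_iff]
    split_ifs <;> simp_all
  have hs : q₀.IsSymmetric := by
    intro e
    ext d
    obtain ⟨d', rfl⟩ : ∃ d' : Fin l →₀ ℕ, d'.mapDomain e = d :=
      ⟨d.mapDomain e.symm, by simp [← Finsupp.mapDomain_comp]⟩
    have h1 : coeff (d'.mapDomain e) q = coeff d' q := by
      conv_lhs => rw [← hq e]
      exact coeff_rename_mapDomain _ e.injective _ _
    rw [coeff_rename_mapDomain _ e.injective, hc, hc, h1]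
    congr 1
    rw [eq_iff_iff, ← e.symm.forall_congr_right]
    simp
  have h0 : q₀ ∈ A := by
    refine mem_of_even A hA q₀ hs fun d hd => ?_
    rw [mem_support_iff, hc] at hd
    by_contra hne
    exact hd (if_neg hne)
  have h1 : q - q₀ ∈ A := by
    have hpar : ∀ d ∈ (q - q₀).support, ∀ i, d i % 2 = 1 := by
      intro d hd i
      rw [mem_support_iff, coeff_sub, hc] at hd
      by_cases hP : ∀ i, d i % 2 = 0
      · simp [hP] at hd
      · simp only [hP, if_false, sub_zero] at hd
        by_contra hne
        refine hP fun j => ?_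
        have := h d (mem_support_iff.2 hd) i j
        omega
    have hsub : (q - q₀).IsSymmetric := hq.sub hs
    rw [eq_mul_expand_halve _ 1 hpar, pow_one]
    exact A.mul_mem hX (expand_mem A hA _ (halve_isSymmetric _ 1 hpar hsub))
  simpa using A.add_mem h1 h0

end symmetric

namespace Pairing

variable {l N : ℕ} {F : Type*} [Field F] (P : Pairing l N)

lemma eval_res (p : MvPolynomial (SkewIx N) F) (y : Fin l → F) :
    eval y (P.res F p) = evalAt (P.cartan y) p := by
  rw [res, ← coe_aeval_eq_eval, RingHom.coe_coe, evalAt_comp]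
  congr 2
  rw [← AlgHom.coe_toRingHom, P.cartan_map]
  congr 1
  ext i
  simp

lemma res_isSymmetric [CharZero F] (p : MvPolynomial (SkewIx N) F)
    (hp : ∀ A : Matrix (Fin N) (Fin N) F, Aᵀ = -A → soDeriv A p = 0) :
    (P.res F p).IsSymmetric := by
  intro e
  induction e using Equiv.Perm.swap_induction_on with
  | one => simp
  | swap_mul f i k _ ih =>
    rw [Equiv.Perm.coe_mul, ← rename_rename, ih]
    refine MvPolynomial.funext fun y => ?_
    rw [eval_rename, eval_res, eval_res, P.evalAt_cartan_swap p hp]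

/-- If a polynomial has the same values at the points of the Cartan subalgebra with coordinates `y`
and `ε y`, each monomial of its restriction is fixed by this scaling. -/
lemma res_scale (p : MvPolynomial (SkewIx N) F) (ε : Fin l → F)
    [CharZero F] (h : ∀ y : Fin l → F, evalAt (P.cartan (fun j => ε j * y j)) p = evalAt (P.cartan y) p)
    {d : Fin l →₀ ℕ} (hd : d ∈ (P.res F p).support) : ∏ j, ε j ^ d j = 1 := by
  have h1 : (aeval (fun j => C (ε j) * X j) (P.res F p) : MvPolynomial (Fin l) F) = P.res F p := by
    refine MvPolynomial.funext fun y => ?_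
    rw [eval_res, ← h, ← eval_res, ← coe_aeval_eq_eval, RingHom.coe_coe, ← AlgHom.comp_apply,
      comp_aeval]
    simp [aeval_eq_eval]
  have h2 := coeff_scale ε (P.res F p) d
  rw [h1] at h2
  exact (mul_right_cancel₀ (mem_support_iff.1 hd) ((one_mul _).trans h2)).symm

lemma res_same_parity [CharZero F] (p : MvPolynomial (SkewIx N) F)
    (hp : ∀ A : Matrix (Fin N) (Fin N) F, Aᵀ = -A → soDeriv A p = 0)
    (d : Fin l →₀ ℕ) (hd : d ∈ (P.res F p).support) (i k : Fin l) : d i % 2 = d k % 2 := by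
  by_cases hik : i = k
  · rw [hik]
  have h1 := P.res_scale p (fun j => (if j = i then -1 else 1) * (if j = k then -1 else 1))
    (fun y => by
      rw [← P.evalAt_cartan_neg_neg p hp y hik]
      congr 3
      ext j
      by_cases h1 : j = i <;> by_cases h2 : j = k <;> simp_all) hd
  simp only [mul_pow, Finset.prod_mul_distrib, ite_pow, one_pow, Finset.prod_ite_eq',
    Finset.mem_univ, if_true] at h1
  rw [← pow_add, neg_one_pow_eq_one_iff_even (by norm_num)] at h1
  rw [Nat.even_iff] at h1
  omega

lemma res_even [CharZero F] (p : MvPolynomial (SkewIx N) F)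
    (hp : ∀ A : Matrix (Fin N) (Fin N) F, Aᵀ = -A → soDeriv A p = 0)
    {u : Fin N} (hu : u ∉ Set.range P.e)
    (d : Fin l →₀ ℕ) (hd : d ∈ (P.res F p).support) (i : Fin l) : d i % 2 = 0 := by
  have h1 := P.res_scale p (fun j => if j = i then -1 else 1)
    (fun y => by
      rw [← P.evalAt_cartan_neg p hp y i hu]
      congr 3
      ext j
      by_cases h1 : j = i <;> simp_all) hd
  simp only [ite_pow, one_pow, Finset.prod_ite_eq',
    Finset.mem_univ, if_true] at h1
  rw [neg_one_pow_eq_one_iff_even (by norm_num)] at h1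
  exact Nat.even_iff.1 h1

end Pairing

/-! ### Restrictions of the basic invariants -/

namespace Pairing

variable {l N : ℕ} (P : Pairing l N) {R : Type*} [CommRing R]

lemma det_one_add_cartan (y : Fin l → R) : (1 + P.cartan y).det = ∏ i, (1 + y i ^ 2) := by
  classical
  let E : (Fin 2 × Fin l) ⊕ ↥(Set.range P.e)ᶜ ≃ Fin N :=
    (Equiv.sumCongr ((Equiv.prodComm _ _).trans (Equiv.ofInjective P.e P.inj))
      (Equiv.refl _)).trans (Equiv.Set.sumCompl (Set.range P.e))
  have hE1 : ∀ a i, E (Sum.inl (a, i)) = P.e (i, a) := fun a i => rfl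
  have hE2 : ∀ u, E (Sum.inr u) = u.1 := fun u => rfl
  rw [← Matrix.det_submatrix_equiv_self E]
  have : (1 + P.cartan y).submatrix E E = Matrix.fromBlocks
      (Matrix.blockDiagonal fun i => !![1, y i; -y i, 1]) 0 0 1 := by
    ext u w
    rcases u with ⟨a, i⟩ | u <;> rcases w with ⟨b, j⟩ | w
    · simp only [submatrix_apply, Matrix.add_apply, hE1, cartan_apply, fromBlocks_apply₁₁,
        blockDiagonal_apply, one_apply, P.inj.eq_iff, Prod.mk.injEq]
      by_cases hij : i = j
      · subst hij
        fin_cases a <;> fin_cases b <;> simp [J]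
      · simp [hij]
    · simp only [submatrix_apply, Matrix.add_apply, hE1, hE2, fromBlocks_apply₁₂, P.cartan_out' y w.2]
      rw [one_apply_ne (fun h => w.2 ⟨_, h⟩)]
      simp
    · simp only [submatrix_apply, Matrix.add_apply, hE1, hE2, fromBlocks_apply₂₁, P.cartan_out y u.2]
      rw [one_apply_ne (fun h => u.2 ⟨_, h.symm⟩)]
      simp
    · simp only [submatrix_apply, Matrix.add_apply, hE2, fromBlocks_apply₂₂, P.cartan_out y u.2]
      simp [one_apply, Subtype.ext_iff]
  rw [this, Matrix.det_fromBlocks_zero₂₁, Matrix.det_blockDiagonal, Matrix.det_one, mul_one]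
  refine Finset.prod_congr rfl fun i _ => ?_
  rw [Matrix.det_fin_two_of]
  ring

lemma principalMinorSum_cartan (j : ℕ) (y : Fin l → R) :
    principalMinorSum (2 * j) (P.cartan y)
      = ∑ s ∈ Finset.univ.powersetCard j, ∏ i ∈ s, y i ^ 2 := by
  rw [principalMinorSum_eq_coeff]
  have : (Polynomial.X : Polynomial R) • (P.cartan y).map Polynomial.C
      = P.cartan (fun i => Polynomial.X * Polynomial.C (y i)) := by
    rw [P.cartan_map]
    ext1 u w
    simp only [Matrix.smul_apply, cartan, of_apply, smul_eq_mul, Finset.mul_sum, mul_sub, mul_ite,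
      mul_zero]
  rw [this, det_one_add_cartan, Finset.prod_one_add, Polynomial.finsetSum_coeff,
    Finset.powersetCard_eq_filter, Finset.sum_filter]
  refine Finset.sum_congr rfl fun s _ => ?_
  simp only [mul_pow, Finset.prod_mul_distrib, Finset.prod_const, ← pow_mul, ← Polynomial.C_pow,
    ← map_prod]
  rw [Polynomial.coeff_X_pow_mul', Polynomial.coeff_C]
  split_ifs <;> first | rfl | omega

lemma res_principalMinorSum (F : Type*) [Field F] (j : ℕ) :
    P.res F (principalMinorSum (2 * j) (genSkew N)) = expand 2 (esymm (Fin l) F j) := by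
  rw [res, ← AlgHom.coe_toRingHom, map_principalMinorSum, AlgHom.coe_toRingHom,
    map_genSkew _ (P.cartan_neg _) (P.cartan_diag _), principalMinorSum_cartan, esymm]
  simp only [map_sum, map_prod, expand_X]

lemma sign_eq_J (ρ : Equiv.Perm (Fin 2)) : ((Equiv.Perm.sign ρ : ℤ) : R) = J R (ρ 0) (ρ 1) := by
  have h : ∀ ρ : Equiv.Perm (Fin 2), (ρ 0 = 0 ∧ ρ 1 = 1 ∧ Equiv.Perm.sign ρ = 1) ∨
      (ρ 0 = 1 ∧ ρ 1 = 0 ∧ Equiv.Perm.sign ρ = -1) := by decide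
  rcases h ρ with ⟨h0, h1, h2⟩ | ⟨h0, h1, h2⟩ <;> simp [h0, h1, h2, J]

/-- A permutation of `Fin l × Fin 2` which maps pairs to pairs permutes the pairs and acts
within each of them. -/
lemma exists_of_preserves (σ : Equiv.Perm (Fin l × Fin 2)) (h : ∀ i, (σ (i, 0)).1 = (σ (i, 1)).1) :
    ∃ (τ : Equiv.Perm (Fin l)) (ρ : Fin l → Equiv.Perm (Fin 2)),
      ∀ i a, σ (i, a) = (τ i, ρ i a) := by
  have h2 : ∀ i, (σ (i, 0)).2 ≠ (σ (i, 1)).2 := fun i he => by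
    have := σ.injective (Prod.ext (h i) he)
    simp at this
  have hρ : ∀ i, Function.Injective fun a => (σ (i, a)).2 := by
    intro i a b hab
    fin_cases a <;> fin_cases b <;> simp_all
    exact h2 i hab.symm
  have h3 : ∀ i a, (σ (i, a)).1 = (σ (i, 0)).1 := by
    intro i a
    fin_cases a
    · rfl
    · exact (h i).symm
  have hτ : Function.Injective fun i => (σ (i, 0)).1 := by
    intro i k hik
    obtain ⟨a, ha⟩ := (Finite.surjective_of_injective (hρ i)) (σ (k, 0)).2
    have := σ.injective (Prod.ext ((h3 i a).trans hik) ha : σ (i, a) = σ (k, 0))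
    exact congrArg Prod.fst this
  refine ⟨Equiv.ofBijective _ (Finite.injective_iff_bijective.1 hτ),
    fun i => Equiv.ofBijective _ (Finite.injective_iff_bijective.1 (hρ i)), fun i a => ?_⟩
  exact Prod.ext (h3 i a) rfl

lemma sign_mul_prod_J (σ : Equiv.Perm (Fin l × Fin 2)) (y : Fin l → R)
    (h : ∀ i, (σ (i, 0)).1 = (σ (i, 1)).1) :
    ((Equiv.Perm.sign σ : ℤ) : R) * ∏ i, y (σ (i, 0)).1 * J R (σ (i, 0)).2 (σ (i, 1)).2
      = ∏ i, y i := by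
  obtain ⟨τ, ρ, hσ⟩ := exists_of_preserves σ h
  have h1 : σ = (Equiv.prodCongrLeft fun _ : Fin 2 => τ) * Equiv.prodCongrRight ρ := by
    ext1 ⟨i, a⟩
    rw [hσ]
    rfl
  have h2 : Equiv.Perm.sign σ = ∏ i, Equiv.Perm.sign (ρ i) := by
    rw [h1, Equiv.Perm.sign_mul, Equiv.Perm.sign_prodCongrLeft, Equiv.Perm.sign_prodCongrRight]
    simp
  simp only [hσ, h2, Finset.prod_mul_distrib, ← sign_eq_J]
  rw [Equiv.prod_comp τ y, mul_left_comm, Units.coe_prod, Int.cast_prod, ← Finset.prod_mul_distrib]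
  have : ∀ i, ((Equiv.Perm.sign (ρ i) : ℤ) : R) * ((Equiv.Perm.sign (ρ i) : ℤ) : R) = 1 := by
    intro i
    rw [← Int.cast_mul, Int.units_coe_mul_self, Int.cast_one]
  simp [this]

end Pairing

/-- On the Cartan subalgebra the Pfaffian is a nonzero multiple of the product of the coordinates:
every nonzero summand contributes the same. -/
lemma Pairing.pfSum_cartan {N : ℕ} (P : Pairing (N / 2) N) (hN : N / 2 * 2 = N)
    {R : Type*} [CommRing R] (y : Fin (N / 2) → R) :
    ∃ c : ℤ, c ≠ 0 ∧ pfSum (P.cartan y) = c * ∏ i, y i := by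
  classical
  let E : Fin (N / 2) × Fin 2 ≃ Fin N := Equiv.ofBijective P.e
    ((Fintype.bijective_iff_injective_and_card _).2 ⟨P.inj, by simp [hN]⟩)
  let G : Finset (Equiv.Perm (Fin (N / 2) × Fin 2)) :=
    Finset.univ.filter fun σ => ∀ i, (σ (i, 0)).1 = (σ (i, 1)).1
  have hE : ∀ x, E x = P.e x := fun x => rfl
  let ε := Equiv.Perm.sign ((stdPair hN).symm.trans E)
  refine ⟨ε * G.card, ?_, ?_⟩
  · have : G.Nonempty := ⟨1, by simp [G]⟩
    have h0 : G.card ≠ 0 := this.card_ne_zero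
    simp [h0]
  have hterm : ∀ σ : Equiv.Perm (Fin (N / 2) × Fin 2),
      ((Equiv.Perm.sign σ : ℤ) : R) * ∏ i, P.cartan y (E (σ (i, 0))) (E (σ (i, 1)))
        = if ∀ i, (σ (i, 0)).1 = (σ (i, 1)).1 then ∏ i, y i else 0 := by
    intro σ
    simp only [hE]
    split_ifs with h
    · rw [← sign_mul_prod_J σ y h]
      congr 1
      refine Finset.prod_congr rfl fun i _ => ?_
      have := P.cartan_apply y (σ (i, 0)).1 (σ (i, 1)).1 (σ (i, 0)).2 (σ (i, 1)).2
      rw [if_pos (h i)] at this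
      exact this
    · push Not at h
      obtain ⟨i, hi⟩ := h
      rw [Finset.prod_eq_zero (Finset.mem_univ i), mul_zero]
      have := P.cartan_apply y (σ (i, 0)).1 (σ (i, 1)).1 (σ (i, 0)).2 (σ (i, 1)).2
      rw [if_neg hi] at this
      exact this
  rw [pfSum_eq hN, ← (Equiv.equivCongr (stdPair hN) E).sum_comp]
  -- Passing from the standard pairing to `P` changes all signs by the same factor `ε`.
  have hsign : ∀ σ : Equiv.Perm (Fin (N / 2) × Fin 2),
      Equiv.Perm.sign (Equiv.equivCongr (stdPair hN) E σ) = ε * Equiv.Perm.sign σ := by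
    intro σ
    rw [← Equiv.Perm.sign_permCongr (stdPair hN) σ, ← Equiv.Perm.sign_mul]
    congr 1
    ext1 x
    simp [Equiv.permCongr_apply]
  simp only [hsign, Equiv.equivCongr_apply_apply, Equiv.symm_apply_apply, zsmul_eq_mul,
    Units.val_mul, Int.cast_mul, mul_assoc, hterm]
  rw [← Finset.mul_sum, ← Finset.sum_filter, Finset.sum_const, nsmul_eq_mul]
  simp [G]

lemma Pairing.res_pfaffianPoly {N : ℕ} (P : Pairing (N / 2) N) (hN : N / 2 * 2 = N)
    (F : Type*) [Field F] [CharZero F] :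
    ∃ c : F, c ≠ 0 ∧ P.res F (pfaffianPoly N) = C c * ∏ i, X i := by
  obtain ⟨c, hc, h⟩ := P.pfSum_cartan hN (X : Fin (N / 2) → MvPolynomial (Fin (N / 2)) F)
  refine ⟨((2 ^ (N / 2) * (N / 2).factorial : F))⁻¹ * c, ?_, ?_⟩
  · refine mul_ne_zero (inv_ne_zero (mul_ne_zero (by simp) ?_)) (by exact_mod_cast hc)
    exact_mod_cast Nat.factorial_ne_zero _
  · rw [res, evalAt_pfaffianPoly _ (P.cartan_neg _) (P.cartan_diag _), h, C_mul, mul_assoc,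
      MvPolynomial.algebraMap_eq]
    congr 2

/-! ### Generation -/

section generation

variable {F : Type*} [Field F]

lemma soBasicInv_of_ne (m n : ℕ) (i : Fin ((m + n) / 2)) (h : 2 * ((i : ℕ) + 1) ≠ m + n) :
    soBasicInv (𝕜 := F) m n i = principalMinorSum (2 * ((i : ℕ) + 1)) (genSkew (m + n)) :=
  if_neg h

lemma soBasicInv_of_eq (m n : ℕ) (i : Fin ((m + n) / 2)) (h : 2 * ((i : ℕ) + 1) = m + n) :
    soBasicInv (𝕜 := F) m n i = pfaffianPoly (m + n) :=
  if_pos h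

lemma esymm_top (l : ℕ) : esymm (Fin l) F l = ∏ i, X i := by
  rw [esymm]
  have : (Finset.univ : Finset (Fin l)).powersetCard l = {Finset.univ} := by
    have := Finset.powersetCard_self (Finset.univ : Finset (Fin l))
    rwa [Finset.card_fin] at this
  rw [this, Finset.sum_singleton]

/-- The infinitesimal Chevalley restriction theorem for `so_N`: restriction to the Cartan
subalgebra is injective on invariants, and the restriction of an invariant is a polynomial in the
restrictions of the basic invariants. -/
theorem mem_adjoin_of_invariant [CharZero F] (m n : ℕ) (P : Pairing ((m + n) / 2) (m + n))
    (p : MvPolynomial (SkewIx (m + n)) F)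
    (hp : ∀ A : Matrix (Fin (m + n)) (Fin (m + n)) F, Aᵀ = -A → soDeriv A p = 0) :
    p ∈ Algebra.adjoin F (Set.range (soBasicInv (𝕜 := F) m n)) := by
  set B := Algebra.adjoin F (Set.range (soBasicInv (𝕜 := F) m n)) with hB
  let A := B.map (P.res F)
  have hbas : ∀ i, P.res F (soBasicInv m n i) ∈ A := fun i =>
    ⟨_, Algebra.subset_adjoin ⟨i, rfl⟩, rfl⟩
  have hX : (m + n) / 2 * 2 = m + n → ∏ i, X i ∈ A := by
    intro hN
    rcases Nat.eq_zero_or_pos ((m + n) / 2) with h0 | h0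
    · have : IsEmpty (Fin ((m + n) / 2)) := by rw [h0]; infer_instance
      rw [Finset.prod_of_isEmpty]
      exact A.one_mem
    · obtain ⟨c, hc, h⟩ := P.res_pfaffianPoly hN F
      have h1 := hbas ⟨(m + n) / 2 - 1, by omega⟩
      rw [soBasicInv_of_eq _ _ _ (by simp only; omega), h] at h1
      have h2 := A.smul_mem h1 c⁻¹
      rwa [← smul_eq_C_mul, smul_smul, inv_mul_cancel₀ hc, one_smul] at h2
  have hA : ∀ j : Fin ((m + n) / 2), expand 2 (esymm (Fin ((m + n) / 2)) F (j + 1)) ∈ A := by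
    intro j
    -- For even `m + n` the last `e_j(y²)` is the square of `∏ y_i`.
    by_cases hj : 2 * ((j : ℕ) + 1) = m + n
    · have : (j : ℕ) + 1 = (m + n) / 2 := by omega
      rw [this, esymm_top, map_prod]
      simp only [expand_X]
      rw [Finset.prod_pow]
      exact A.pow_mem (hX (by omega)) 2
    · have h1 := hbas j
      rwa [soBasicInv_of_ne _ _ _ hj, P.res_principalMinorSum] at h1
  have hq : P.res F p ∈ A := by
    by_cases hN : (m + n) / 2 * 2 = m + n
    · exact mem_of_same_parity A hA (hX hN) _ (P.res_isSymmetric p hp) (P.res_same_parity p hp)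
    · obtain ⟨u, hu⟩ : ∃ u, u ∉ Set.range P.e := by
        by_contra hne
        push Not at hne
        have h1 := Fintype.card_le_of_surjective P.e hne
        simp at h1
        omega
      exact mem_of_even A hA _ (P.res_isSymmetric p hp) (P.res_even p hp hu)
  obtain ⟨b, hb, hbp⟩ := hq
  have hbinv : ∀ D : Matrix (Fin (m + n)) (Fin (m + n)) F, Dᵀ = -D → soDerivation D b = 0 := by
    intro D hD
    clear hbp
    induction hb using Algebra.adjoin_induction with
    | mem x hx =>
      obtain ⟨i, rfl⟩ := hx
      rw [soDerivation_apply, soBasicInv_invariant m n D hD]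
    | algebraMap r => exact Derivation.map_algebraMap _ r
    | add x y _ _ hx hy => rw [map_add, hx, hy, add_zero]
    | mul x y _ _ hx hy => rw [Derivation.leibniz, hx, hy, smul_zero, smul_zero, add_zero]
  have : p - b = 0 := by
    refine P.eq_zero_of_res (p - b) (fun D hD => ?_) ?_
    · rw [← soDerivation_apply, map_sub, hbinv D hD, soDerivation_apply, hp D hD, sub_zero]
    · rw [map_sub, sub_eq_zero]
      exact hbp.symm
  rw [sub_eq_zero.1 this]
  exact hb

end generation

/-! ### Algebraic independence from leading exponents -/

section leading

variable {F : Type*} [Field F]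

/-- Polynomials whose leading exponents are additively independent are algebraically
independent: distinct monomials in them have distinct leading exponents. -/
lemma algebraicIndependent_of_degree {σ ι : Type*} [Fintype ι] (o : MonomialOrder σ)
    (g : ι → MvPolynomial σ F) (h0 : ∀ i, g i ≠ 0)
    (hinj : Function.Injective fun d : ι →₀ ℕ => ∑ i, d i • o.degree (g i)) :
    AlgebraicIndependent F g := by
  rw [algebraicIndependent_iff]
  intro p hp
  by_contra hne
  let φ : (ι →₀ ℕ) → (σ →₀ ℕ) := fun d => ∑ i, d i • o.degree (g i)
  let M : (ι →₀ ℕ) → MvPolynomial σ F := fun d => ∏ i, g i ^ d i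
  have hM0 : ∀ d, M d ≠ 0 := fun d => Finset.prod_ne_zero_iff.2 fun i _ => pow_ne_zero _ (h0 i)
  have hM : ∀ d, o.degree (M d) = φ d := fun d => by
    simp only [M, φ]
    rw [o.degree_prod fun i _ => pow_ne_zero _ (h0 i)]
    simp only [o.degree_pow]
  obtain ⟨d, hd, hmax⟩ := Finset.exists_max_image p.support (fun d => o.toSyn (φ d))
    (Finset.nonempty_iff_ne_empty.2 (by simpa using hne))
  have h1 : aeval g p = ∑ d ∈ p.support, C (coeff d p) * M d := by
    conv_lhs => rw [p.as_sum, map_sum]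
    refine Finset.sum_congr rfl fun d _ => ?_
    rw [aeval_monomial, Finsupp.prod_fintype _ _ (by simp), MvPolynomial.algebraMap_eq]
  have h2 := congrArg (coeff (φ d)) (h1.symm.trans hp)
  rw [coeff_sum, coeff_zero, Finset.sum_eq_single_of_mem d hd, coeff_C_mul, ← hM d] at h2
  · exact mul_ne_zero (mem_support_iff.1 hd) (o.coeff_degree_ne_zero_iff.2 (hM0 d)) h2
  · intro d' hd' hdd
    rw [coeff_C_mul, o.coeff_eq_zero_of_lt, mul_zero]
    rw [hM]
    refine lt_of_le_of_ne (hmax d' hd') fun he => hdd (hinj (o.toSyn.injective he))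

lemma degree_eq_of_support {σ : Type*} (o : MonomialOrder σ) (g : MvPolynomial σ F) (v : σ →₀ ℕ)
    (hv : v ∈ g.support) (h : ∀ d ∈ g.support, o.toSyn d ≤ o.toSyn v) : o.degree g = v := by
  refine o.toSyn.injective (le_antisymm ?_ (o.le_degree hv))
  exact o.degree_le_iff.2 h

/-- The exponent equal to `a` on `0, …, i` and to `0` elsewhere. -/
def stepExp (l a : ℕ) (i : Fin l) : Fin l →₀ ℕ :=
  Finsupp.equivFunOnFinite.symm fun j => if j ≤ i then a else 0

lemma stepExp_apply (l a : ℕ) (i j : Fin l) : stepExp l a i j = if j ≤ i then a else 0 := rfl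

lemma sum_stepExp_injective {l : ℕ} (a : Fin l → ℕ) (ha : ∀ i, a i ≠ 0) :
    Function.Injective fun d : Fin l →₀ ℕ => ∑ i, d i • stepExp l (a i) i := by
  intro d d' h
  by_contra hne
  have hS : (Finset.univ.filter fun i => d i ≠ d' i).Nonempty := by
    by_contra hE
    rw [Finset.not_nonempty_iff_eq_empty, Finset.filter_eq_empty_iff] at hE
    exact hne (Finsupp.ext fun i => by simpa using hE (Finset.mem_univ i))
  -- At the largest index `j` with `d j ≠ d' j`, only the summands with `i ≥ j` contribute.
  obtain ⟨j, hj, hmax⟩ := Finset.exists_max_image _ id hS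
  have h1 := DFunLike.congr_fun h j
  simp only [Finsupp.finsetSum_apply, Finsupp.smul_apply, stepExp_apply, smul_eq_mul] at h1
  rw [← Finset.add_sum_erase _ _ (Finset.mem_univ j),
    ← Finset.add_sum_erase (a := j) _ (fun i => d' i * _) (Finset.mem_univ j)] at h1
  rw [Finset.sum_congr rfl (g := fun i => d' i * if j ≤ i then a i else 0)] at h1
  · have h2 := add_right_cancel h1
    simp only [le_refl, if_true] at h2
    exact (Finset.mem_filter.1 hj).2 (Nat.eq_of_mul_eq_mul_right (Nat.pos_of_ne_zero (ha j)) h2)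
  · intro i hi
    by_cases hij : j ≤ i
    · have : d i = d' i := by
        by_contra hd
        have := hmax i (by simpa using hd)
        exact (Finset.mem_erase.1 hi).1 (le_antisymm this hij)
      rw [this]
    · simp [hij]

/-- The lex-leading exponent of `e_{i+1}(y₀², …, y_{l-1}²)`. -/
lemma esymm_leading {l : ℕ} (i : Fin l) :
    stepExp l 2 i ∈ (expand 2 (esymm (Fin l) F (i + 1))).support ∧
    ∀ d ∈ (expand 2 (esymm (Fin l) F (i + 1))).support,
      (MonomialOrder.lex (σ := Fin l)).toSyn d ≤ (MonomialOrder.lex (σ := Fin l)).toSyn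
        (stepExp l 2 i) := by
  classical
  let χ : Finset (Fin l) → (Fin l →₀ ℕ) := fun s =>
    Finsupp.equivFunOnFinite.symm fun j => if j ∈ s then 2 else 0
  have hχ : ∀ s j, χ s j = if j ∈ s then 2 else 0 := fun s j => rfl
  have hχinj : Function.Injective χ := by
    intro s t h
    ext j
    have := DFunLike.congr_fun h j
    rw [hχ, hχ] at this
    split_ifs at this <;> simp_all
  have hform : expand 2 (esymm (Fin l) F (i + 1)) =
      ∑ s ∈ Finset.univ.powersetCard (i + 1), monomial (χ s) (1 : F) := by
    rw [esymm, map_sum]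
    refine Finset.sum_congr rfl fun s _ => ?_
    rw [map_prod, monomial_eq, Finsupp.prod_fintype _ _ (by simp)]
    simp only [expand_X, hχ, map_one, one_mul, pow_ite, pow_zero, Finset.prod_ite_mem,
      Finset.univ_inter]
  have hsupp : ∀ d, d ∈ (expand 2 (esymm (Fin l) F (i + 1))).support ↔
      ∃ s : Finset (Fin l), s.card = i + 1 ∧ χ s = d := by
    intro d
    rw [hform, mem_support_iff, coeff_sum]
    simp only [coeff_monomial]
    constructor
    · intro h
      obtain ⟨s, hs, hne⟩ := Finset.exists_ne_zero_of_sum_ne_zero h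
      exact ⟨s, (Finset.mem_powersetCard.1 hs).2, by by_contra hh; exact hne (if_neg hh)⟩
    · rintro ⟨s, hs, rfl⟩
      simp only [hχinj.eq_iff]
      rw [Finset.sum_ite_eq', if_pos (Finset.mem_powersetCard.2 ⟨Finset.subset_univ _, hs⟩)]
      exact one_ne_zero
  have htop : χ (Finset.Iic i) = stepExp l 2 i := by
    ext j
    simp [hχ, stepExp_apply]
  refine ⟨(hsupp _).2 ⟨Finset.Iic i, by simp, htop⟩, fun d hd => ?_⟩
  obtain ⟨s, hs, rfl⟩ := (hsupp d).1 hd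
  by_cases hsi : s = Finset.Iic i
  · rw [hsi, htop]
  refine le_of_lt ?_
  rw [MonomialOrder.lex_lt_iff, Finsupp.Lex.lt_iff]
  have hS : (Finset.Iic i \ s).Nonempty := by
    rw [Finset.sdiff_nonempty]
    intro hsub
    exact hsi (Finset.eq_of_subset_of_card_le hsub (by simp [hs])).symm
  obtain ⟨k, hk, hmin⟩ := Finset.exists_min_image _ id hS
  simp only [Finset.mem_sdiff, Finset.mem_Iic] at hk hmin
  refine ⟨k, fun j hj => ?_, ?_⟩
  · have hji : j ≤ i := hj.le.trans hk.1
    have : j ∈ s := by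
      by_contra hjs
      exact absurd (hmin j ⟨hji, hjs⟩) (not_le.2 hj)
    simp [hχ, stepExp_apply, hji, this]
  · simp [hχ, stepExp_apply, hk.1, hk.2]

end leading

section leadingInv

variable {F : Type*} [Field F]

/-- The exponent of `y₀, …, y_i` in the leading monomial of the restriction of the `i`-th basic
invariant. -/
def leadMult (m n : ℕ) (i : Fin ((m + n) / 2)) : ℕ := if 2 * ((i : ℕ) + 1) = m + n then 1 else 2

/-- `g` has lex-leading exponent `v`. -/
def HasLead {l : ℕ} (g : MvPolynomial (Fin l) F) (v : Fin l →₀ ℕ) : Prop :=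
  v ∈ g.support ∧ ∀ d ∈ g.support,
    (MonomialOrder.lex (σ := Fin l)).toSyn d ≤ (MonomialOrder.lex (σ := Fin l)).toSyn v

lemma hasLead_res [CharZero F] (m n : ℕ) (P : Pairing ((m + n) / 2) (m + n))
    (i : Fin ((m + n) / 2)) :
    HasLead (P.res F (soBasicInv m n i)) (stepExp _ (leadMult m n i) i) := by
  classical
  by_cases hi : 2 * ((i : ℕ) + 1) = m + n
  · obtain ⟨c, hc, h⟩ := P.res_pfaffianPoly (by omega) F
    have h1 : P.res F (soBasicInv m n i) = monomial (stepExp _ 1 i) c := by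
      rw [soBasicInv_of_eq _ _ _ hi, h, monomial_eq, Finsupp.prod_fintype _ _ (by simp)]
      congr 1
      refine Finset.prod_congr rfl fun j _ => ?_
      rw [stepExp_apply, if_pos, pow_one]
      rw [Fin.le_def]
      omega
    rw [leadMult, if_pos hi, h1]
    refine ⟨?_, fun d hd => ?_⟩
    · simp [hc]
    · rw [support_monomial, if_neg hc, Finset.mem_singleton] at hd
      rw [hd]
  · rw [leadMult, if_neg hi, soBasicInv_of_ne _ _ _ hi, P.res_principalMinorSum]
    exact esymm_leading i

lemma algebraicIndependent_of_hasLead {m n : ℕ} (P : Pairing ((m + n) / 2) (m + n))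
    (g : Fin ((m + n) / 2) → MvPolynomial (SkewIx (m + n)) F)
    (h : ∀ i, HasLead (P.res F (g i)) (stepExp _ (leadMult m n i) i)) :
    AlgebraicIndependent F g := by
  refine AlgebraicIndependent.of_comp (P.res F)
    (algebraicIndependent_of_degree MonomialOrder.lex _ (fun i h0 => ?_) ?_)
  · have := (h i).1
    simp only [Function.comp_apply] at h0
    rw [h0] at this
    simp at this
  · have : ∀ i, MonomialOrder.lex.degree ((P.res F ∘ g) i) = stepExp _ (leadMult m n i) i :=
      fun i => degree_eq_of_support _ _ _ (h i).1 (h i).2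
    simp only [this]
    exact sum_stepExp_injective _ fun i => by rw [leadMult]; split_ifs <;> simp

end leadingInv

/-! ### Components of highest g₁-degree -/

section top

variable {F : Type*} [Field F] {l N : ℕ}

lemma Pairing.res_isWeightedHomogeneous (P : Pairing l N) (w : SkewIx N → ℕ)
    (v : SkewIx N) : IsWeightedHomogeneous (fun i => w (P.ix i)) (P.res F (X v)) (w v) := by
  rw [res, evalAt_X]
  by_cases hv : v ∈ Set.range P.ix
  · obtain ⟨i, rfl⟩ := hv
    rw [cartan_ix]
    exact isWeightedHomogeneous_X _ _ i
  · rw [cartan_not_ix _ _ _ hv]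
    exact isWeightedHomogeneous_zero _ _ _

lemma Pairing.res_component (P : Pairing l N) (w : SkewIx N → ℕ) (k : ℕ)
    (p : MvPolynomial (SkewIx N) F) :
    P.res F (weightedHomogeneousComponent w k p)
      = weightedHomogeneousComponent (fun i => w (P.ix i)) k (P.res F p) := by
  induction p using MvPolynomial.induction_on' with
  | add p q hp hq => rw [map_add, map_add, hp, hq, map_add, map_add]
  | monomial s c =>
    have h1 := isWeightedHomogeneous_monomial w s c rfl
    have h2 : IsWeightedHomogeneous (fun i => w (P.ix i)) (P.res F (monomial s c))
        (Finsupp.weight w s) := by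
      rw [monomial_eq, map_mul, Finsupp.prod_fintype _ _ (by simp), map_prod, algHom_C,
        MvPolynomial.algebraMap_eq, Finsupp.weight_apply, Finsupp.sum_fintype _ _ (by simp)]
      refine IsWeightedHomogeneous.C_mul (IsWeightedHomogeneous.prod _ _ _ fun v _ => ?_) c
      rw [map_pow]
      exact (P.res_isWeightedHomogeneous w v).pow _
    by_cases hk : k = Finsupp.weight w s
    · rw [hk, h1.weightedHomogeneousComponent_same, h2.weightedHomogeneousComponent_same]
    · rw [h1.weightedHomogeneousComponent_ne _ hk, h2.weightedHomogeneousComponent_ne _ hk, map_zero]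

/-- If all `g₁`-degrees in `f` are at most the `g₁`-degree of the leading monomial of the
restriction of `f`, then this monomial survives in the restriction of `f^•`. -/
lemma Pairing.hasLead_soTop (P : Pairing l N) (m : ℕ) (f : MvPolynomial (SkewIx N) F)
    (v : Fin l →₀ ℕ) (hv : HasLead (P.res F f) v)
    (hD : ∀ k, Finsupp.weight (fun i => soWeight m N (P.ix i)) v < k →
      weightedHomogeneousComponent (soWeight m N) k f = 0) :
    HasLead (P.res F (soTop m N f)) v := by
  set D := Finsupp.weight (fun i => soWeight m N (P.ix i)) v with hDdef
  have h1 : coeff v (P.res F (weightedHomogeneousComponent (soWeight m N) D f))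
      = coeff v (P.res F f) := by
    rw [P.res_component, coeff_weightedHomogeneousComponent, if_pos hDdef.symm]
  have h2 : IsGreatest {d | weightedHomogeneousComponent (soWeight m N) d f ≠ 0} D := by
    refine ⟨fun h0 => ?_, fun k hk => ?_⟩
    · rw [h0, map_zero, coeff_zero] at h1
      exact mem_support_iff.1 hv.1 h1.symm
    · by_contra hlt
      exact hk (hD k (not_le.1 hlt))
  rw [soTop, h2.csSup_eq]
  refine ⟨?_, fun d hd => hv.2 d ?_⟩
  · rw [mem_support_iff, h1]
    exact mem_support_iff.1 hv.1
  · rw [mem_support_iff, P.res_component, coeff_weightedHomogeneousComponent] at hd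
    rw [mem_support_iff]
    intro h0
    simp [h0] at hd

/-- The `g₁`-degree of the matrix entry in position `(u, w)`. -/
def cross (m : ℕ) (u w : Fin N) : ℕ := if (u : ℕ) < m ↔ (w : ℕ) < m then 0 else 1

lemma genSkew_isWeightedHomogeneous (m : ℕ) (u w : Fin N) :
    IsWeightedHomogeneous (soWeight m N) (genSkew (𝕜 := F) N u w) (cross m u w) := by
  have key : ∀ (u w : Fin N) (h : u < w), soWeight m N ⟨(u, w), h⟩ = cross m u w := by
    intro u w h
    have : (u : ℕ) < w := h
    simp only [soWeight, cross]
    split_ifs <;> omega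
  rw [genSkew]
  split_ifs with h h'
  · rw [← key u w h]
    exact isWeightedHomogeneous_X _ _ _
  · have : cross m u w = cross m w u := by simp only [cross, iff_comm]
    rw [this, ← key w u h']
    exact (isWeightedHomogeneous_X _ _ _).neg
  · exact isWeightedHomogeneous_zero _ _ _

lemma component_sum_eq_zero {ι : Type*} (s : Finset ι) (m k : ℕ) (D : ι → ℕ)
    (f : ι → MvPolynomial (SkewIx N) F)
    (hf : ∀ i ∈ s, IsWeightedHomogeneous (soWeight m N) (f i) (D i)) (hk : ∀ i ∈ s, D i < k) :
    weightedHomogeneousComponent (soWeight m N) k (∑ i ∈ s, f i) = 0 := by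
  rw [map_sum]
  exact Finset.sum_eq_zero fun i hi =>
    (hf i hi).weightedHomogeneousComponent_ne _ (hk i hi).ne'

lemma sum_cross_eq {ι : Type*} (s : Finset ι) (m : ℕ) (x y : ι → Fin N) :
    ∑ i ∈ s, cross m (x i) (y i)
      = (s.filter fun i => (x i : ℕ) < m ∧ ¬ (y i : ℕ) < m).card
        + (s.filter fun i => ¬ (x i : ℕ) < m ∧ (y i : ℕ) < m).card := by
  rw [Finset.card_filter, Finset.card_filter, ← Finset.sum_add_distrib]
  refine Finset.sum_congr rfl fun i _ => ?_
  rw [cross]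
  by_cases h1 : (x i : ℕ) < m <;> by_cases h2 : (y i : ℕ) < m <;> simp [h1, h2]

lemma card_lt_le (m n : ℕ) {ι : Type*} (s : Finset ι) (x : ι → Fin (m + n))
    (hx : Set.InjOn x s) (h : ∀ i ∈ s, (x i : ℕ) < m) : s.card ≤ m := by
  have := Finset.card_le_card_of_injOn (t := Finset.range m) (fun i => (x i : ℕ))
    (fun i hi => by simpa using h i hi) (fun i hi j hj hij => hx hi hj (Fin.ext hij))
  simpa using this

lemma card_ge_le (m n : ℕ) {ι : Type*} (s : Finset ι) (x : ι → Fin (m + n))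
    (hx : Set.InjOn x s) (h : ∀ i ∈ s, ¬ (x i : ℕ) < m) : s.card ≤ n := by
  have := Finset.card_le_card_of_injOn (t := Finset.Ico m (m + n)) (fun i => (x i : ℕ))
    (fun i hi => by simpa using not_lt.1 (h i hi)) (fun i hi j hj hij => hx hi hj (Fin.ext hij))
  simpa using this

/-- For injective `x` and `y`, at most `min m n` of the pairs `(x i, y i)` lie in each of the two
off-diagonal blocks. -/
lemma sum_cross_le (m n : ℕ) {ι : Type*} (s : Finset ι) (x y : ι → Fin (m + n))
    (hx : Set.InjOn x s) (hy : Set.InjOn y s) :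
    ∑ i ∈ s, cross m (x i) (y i) ≤ min s.card (2 * min m n) := by
  have hs : ∑ i ∈ s, cross m (x i) (y i) ≤ s.card := by
    rw [Finset.card_eq_sum_ones]
    exact Finset.sum_le_sum fun i _ => by rw [cross]; split_ifs <;> simp
  rw [sum_cross_eq] at *
  set A := s.filter fun i => (x i : ℕ) < m ∧ ¬ (y i : ℕ) < m
  set B := s.filter fun i => ¬ (x i : ℕ) < m ∧ (y i : ℕ) < m
  have a1 := card_lt_le m n A x (hx.mono (Finset.coe_subset.2 (Finset.filter_subset _ _)))
    fun i hi => (Finset.mem_filter.1 hi).2.1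
  have a2 := card_ge_le m n A y (hy.mono (Finset.coe_subset.2 (Finset.filter_subset _ _)))
    fun i hi => (Finset.mem_filter.1 hi).2.2
  have b1 := card_lt_le m n B y (hy.mono (Finset.coe_subset.2 (Finset.filter_subset _ _)))
    fun i hi => (Finset.mem_filter.1 hi).2.2
  have b2 := card_ge_le m n B x (hx.mono (Finset.coe_subset.2 (Finset.filter_subset _ _)))
    fun i hi => (Finset.mem_filter.1 hi).2.1
  omega

/-- If moreover the values of `x` and `y` are all distinct, each pair in an off-diagonal block uses
up one index of either block. -/
lemma sum_cross_le' (m n : ℕ) {ι : Type*} (s : Finset ι) (x y : ι → Fin (m + n))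
    (hx : Set.InjOn x s) (hy : Set.InjOn y s) (hxy : ∀ i ∈ s, ∀ j ∈ s, x i ≠ y j) :
    ∑ i ∈ s, cross m (x i) (y i) ≤ min m n := by
  classical
  have hc : ∑ i ∈ s, cross m (x i) (y i) = (s.filter fun i => ¬((x i : ℕ) < m ↔ (y i : ℕ) < m)).card := by
    rw [Finset.card_filter]
    exact Finset.sum_congr rfl fun i _ => by rw [cross]; split_ifs <;> simp_all
  rw [hc, le_min_iff]
  constructor
  · refine card_lt_le m n _ (fun i => if (x i : ℕ) < m then x i else y i) ?_ ?_
    · intro i hi j hj hij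
      have hi' := (Finset.mem_filter.1 hi).1
      have hj' := (Finset.mem_filter.1 hj).1
      simp only at hij
      split_ifs at hij
      · exact hx hi' hj' hij
      · exact absurd hij (hxy i hi' j hj')
      · exact absurd hij.symm (hxy j hj' i hi')
      · exact hy hi' hj' hij
    · intro i hi
      have := (Finset.mem_filter.1 hi).2
      split_ifs <;> tauto
  · refine card_ge_le m n _ (fun i => if (x i : ℕ) < m then y i else x i) ?_ ?_
    · intro i hi j hj hij
      have hi' := (Finset.mem_filter.1 hi).1
      have hj' := (Finset.mem_filter.1 hj).1
      simp only at hij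
      split_ifs at hij
      · exact hy hi' hj' hij
      · exact absurd hij.symm (hxy j hj' i hi')
      · exact absurd hij (hxy i hi' j hj')
      · exact hx hi' hj' hij
    · intro i hi
      have := (Finset.mem_filter.1 hi).2
      split_ifs <;> tauto

end top

/-! ### The Cartan subalgebra adapted to the symmetric pair -/

section good

variable {F : Type*} [Field F]

/-- No term of the `i`-th basic invariant has `g₁`-degree above `2 min (i + 1, m, n)`, and no term
of the Pfaffian has `g₁`-degree above `min (m, n)`. -/
lemma component_soBasicInv (m n : ℕ) (i : Fin ((m + n) / 2)) (k : ℕ)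
    (hk : leadMult m n i * min ((i : ℕ) + 1) (min m n) < k) :
    weightedHomogeneousComponent (soWeight m (m + n)) k (soBasicInv (𝕜 := F) m n i) = 0 := by
  by_cases hi : 2 * ((i : ℕ) + 1) = m + n
  · rw [leadMult, if_pos hi] at hk
    rw [soBasicInv_of_eq _ _ _ hi, pfaffianPoly, weightedHomogeneousComponent_C_mul]
    refine mul_eq_zero_of_right _ (component_sum_eq_zero _ _ _ _ _ (fun σ _ =>
      Submodule.smul_of_tower_mem (weightedHomogeneousSubmodule F (soWeight m (m + n)) _) _
        (IsWeightedHomogeneous.prod _ _ _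
          fun j _ => genSkew_isWeightedHomogeneous m _ _)) fun σ _ => ?_)
    refine lt_of_le_of_lt (sum_cross_le' m n _ _ _ ?_ ?_ ?_) (by omega)
    · intro a _ b _ hab
      have := σ.injective hab
      simp only [Fin.mk.injEq] at this
      exact Fin.ext (by omega)
    · intro a _ b _ hab
      have := σ.injective hab
      simp only [Fin.mk.injEq] at this
      exact Fin.ext (by omega)
    · intro a _ b _ hab
      have := σ.injective hab
      simp only [Fin.mk.injEq] at this
      omega
  · rw [leadMult, if_neg hi] at hk
    rw [soBasicInv_of_ne _ _ _ hi, principalMinorSum, map_sum]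
    refine Finset.sum_eq_zero fun s hs => ?_
    rw [det_apply]
    refine component_sum_eq_zero _ _ _ _ _ (fun σ _ =>
      Submodule.smul_of_tower_mem (weightedHomogeneousSubmodule F (soWeight m (m + n)) _) _
        (IsWeightedHomogeneous.prod _ _ _
          fun j _ => genSkew_isWeightedHomogeneous m _ _)) fun σ _ => ?_
    refine lt_of_le_of_lt (sum_cross_le m n _ _ _ ?_ ?_) ?_
    · intro a _ b _ hab
      exact σ.injective (Subtype.ext hab)
    · intro a _ b _ hab
      exact Subtype.ext hab
    · rw [Finset.card_univ, Fintype.card_coe, (Finset.mem_powersetCard.1 hs).2]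
      omega

/-- The position of the `a`-th member (`a = 0, 1`) of the `i`-th pair in `blockPairing`. -/
def blockIdx (m n i a : ℕ) : ℕ :=
  if i < min m n then i + (if a = 0 then 0 else m)
  else (if m ≤ n then 2 * m else n) + 2 * (i - min m n) + (if a = 0 then 0 else 1)

lemma blockIdx_lt (m n i a : ℕ) (hi : i < (m + n) / 2) : blockIdx m n i a < m + n := by
  rw [blockIdx]
  split_ifs <;> omega

lemma blockIdx_inj (m n i a j b : ℕ) (hi : i < (m + n) / 2) (hj : j < (m + n) / 2) (ha : a < 2)
    (hb : b < 2) (h : blockIdx m n i a = blockIdx m n j b) : i = j ∧ a = b := by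
  rw [blockIdx, blockIdx] at h
  split_ifs at h <;> omega

lemma blockIdx_inj' (m n : ℕ) : Function.Injective fun x : Fin ((m + n) / 2) × Fin 2 =>
    (⟨blockIdx m n x.1 x.2, blockIdx_lt m n _ _ x.1.isLt⟩ : Fin (m + n)) := by
  rintro ⟨i, a⟩ ⟨j, b⟩ h
  have key := blockIdx_inj m n i a j b i.isLt j.isLt a.isLt b.isLt (Fin.mk.inj h)
  exact Prod.ext (Fin.ext key.1) (Fin.ext key.2)

/-- A Cartan subalgebra of `so_{m+n}` containing a maximal abelian subspace of `g₁`: the indices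
`i` and `m + i` are paired for `i < min m n`, and the rest consecutively. -/
def blockPairing (m n : ℕ) : Pairing ((m + n) / 2) (m + n) where
  e x := ⟨blockIdx m n x.1 x.2, blockIdx_lt m n _ _ x.1.isLt⟩
  inj := blockIdx_inj' m n
  lt i := by
    rw [Fin.lt_def]
    simp only [blockIdx, Fin.val_zero, Fin.val_one, if_true, one_ne_zero, if_false]
    split_ifs <;> omega
  out u w hu hw := by
    classical
    have h1 := Finset.card_image_of_injective Finset.univ (blockIdx_inj' m n)
    rw [Finset.card_univ, Fintype.card_prod, Fintype.card_fin, Fintype.card_fin] at h1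
    have h2 := Finset.card_compl (Finset.univ.image fun x : Fin ((m + n) / 2) × Fin 2 =>
      (⟨blockIdx m n x.1 x.2, blockIdx_lt m n _ _ x.1.isLt⟩ : Fin (m + n)))
    rw [h1, Fintype.card_fin] at h2
    refine Finset.card_le_one.1 (h2.le.trans (by omega)) u ?_ w ?_
    · simpa using hu
    · simpa using hw

lemma soWeight_blockPairing (m n : ℕ) (i : Fin ((m + n) / 2)) :
    soWeight m (m + n) ((blockPairing m n).ix i) = if (i : ℕ) < min m n then 1 else 0 := by
  simp only [soWeight, Pairing.ix, blockPairing, blockIdx, Fin.val_zero, Fin.val_one, if_true,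
    one_ne_zero, if_false]
  split_ifs <;> omega

lemma weight_stepExp (m n a : ℕ) (i : Fin ((m + n) / 2)) :
    Finsupp.weight (fun j => soWeight m (m + n) ((blockPairing m n).ix j)) (stepExp _ a i)
      = a * min ((i : ℕ) + 1) (min m n) := by
  simp only [soWeight_blockPairing]
  rw [Finsupp.weight_apply, Finsupp.sum_fintype _ _ (by simp)]
  have h1 : ∀ j : Fin ((m + n) / 2), stepExp _ a i j • (if (j : ℕ) < min m n then 1 else 0)
      = if (j : ℕ) < min ((i : ℕ) + 1) (min m n) then a else 0 := by
    intro j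
    rw [stepExp_apply, smul_eq_mul]
    have : j ≤ i ↔ (j : ℕ) < (i : ℕ) + 1 := by rw [Fin.le_def]; omega
    simp only [this]
    split_ifs <;> omega
  simp only [h1]
  rw [← Finset.sum_filter, Finset.sum_const, smul_eq_mul, mul_comm]
  congr 1
  have hi := i.isLt
  rw [Fin.card_filter_val_lt]
  omega

end good

theorem so_good_generating_system (m n : ℕ) :
    -- the f_i (and Pf for m+n even) are basic invariants of 𝕜[so_{m+n}]^{SO_{m+n}} :
    (∀ A : Matrix (Fin (m + n)) (Fin (m + n)) 𝕜, Aᵀ = -A →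
      ∀ i, soDeriv A (soBasicInv (𝕜 := 𝕜) m n i) = 0) ∧
    AlgebraicIndependent 𝕜 (soBasicInv (𝕜 := 𝕜) m n) ∧
    (∀ p : MvPolynomial (SkewIx (m + n)) 𝕜,
      (∀ A : Matrix (Fin (m + n)) (Fin (m + n)) 𝕜, Aᵀ = -A → soDeriv A p = 0) →
      p ∈ Algebra.adjoin 𝕜 (Set.range (soBasicInv (𝕜 := 𝕜) m n))) ∧
    -- good generating system: the top components are algebraically independent:
    AlgebraicIndependent 𝕜
      (fun i => soTop m (m + n) (soBasicInv (𝕜 := 𝕜) m n i)) := by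
  refine ⟨fun A hA i => soBasicInv_invariant m n A hA i,
    algebraicIndependent_of_hasLead (blockPairing m n) _ (hasLead_res m n _),
    mem_adjoin_of_invariant m n (blockPairing m n),
    algebraicIndependent_of_hasLead (blockPairing m n) _ fun i =>
      (blockPairing m n).hasLead_soTop m _ _ (hasLead_res m n _ i) fun k hk => ?_⟩
  rw [weight_stepExp] at hk
  exact component_soBasicInv m n i k hk

end
end

section
/- In the polynomial ring 𝕜[ε₁,ε₂,ε₃,ε₄], the four polynomials p₁ = ε₁², p₂ = ε₁⁴(ε₂²+ε₃²+ε₄²), p₃ = ε₁⁴( (1/12)(ε₂²+ε₃²+ε₄²)² − (1/4)(ε₂²ε₃² + ε₂²ε₄² + ε₃²ε₄²) ), and p₄ = ε₁⁶( −(3/2)ε₂²ε₃²ε₄² − (1/9)(ε₂²+ε₃²+ε₄²)³ + (1/2)(ε₂²+ε₃²+ε₄²)(ε₂²ε₃² + ε₂²ε₄² + ε₃²ε₄²) ) are algebraically independent over 𝕜. -/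
/-!
The transcendence degree of `𝕜[ε₁,ε₂,ε₃,ε₄]` over `𝕜` is four, so four elements are algebraically
independent as soon as the whole ring is algebraic over the subalgebra `A` which they generate.
Now `ε₁` is a root of `T² - p₁`. Up to powers of `p₁ = ε₁²`, the elementary symmetric polynomials
`s`, `q`, `e` of `ε₂², ε₃², ε₄²` are successively recovered from `p₂`, `p₃`, `p₄`:
* `p₁² s = p₂`,
* `p₁⁴ q = p₂² / 3 - 4 p₁² p₃`,
* `p₁⁶ e = (2 / 3) (-p₁³ p₄ - p₂³ / 9 + p₂ (p₁⁴ q) / 2)`.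
Hence each of `ε₂, ε₃, ε₄` is a root of `p₁⁶ (T⁶ - s T⁴ + q T² - e)`, a nonzero polynomial with
coefficients in `A`.
-/

/-!
STATEMENT 13: In the polynomial ring 𝕜[ε₁,ε₂,ε₃,ε₄] over a field of characteristic zero,
the four polynomials
  p₁ = ε₁²,
  p₂ = ε₁⁴(ε₂²+ε₃²+ε₄²),
  p₃ = ε₁⁴((1/12)(ε₂²+ε₃²+ε₄²)² − (1/4)(ε₂²ε₃²+ε₂²ε₄²+ε₃²ε₄²)),
  p₄ = ε₁⁶(−(3/2)ε₂²ε₃²ε₄² − (1/9)(ε₂²+ε₃²+ε₄²)³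
        + (1/2)(ε₂²+ε₃²+ε₄²)(ε₂²ε₃²+ε₂²ε₄²+ε₃²ε₄²))
are algebraically independent over 𝕜.
-/

open MvPolynomial

noncomputable section

variable (𝕜 : Type*) [Field 𝕜] [CharZero 𝕜]

/-- ε₁, ε₂, ε₃, ε₄ as variables of `MvPolynomial (Fin 4) 𝕜`. -/
abbrev ε (i : Fin 4) : MvPolynomial (Fin 4) 𝕜 := X i

/-- e₂² + ε₃² + ε₄² -/
def sq23 : MvPolynomial (Fin 4) 𝕜 := ε 𝕜 1 ^ 2 + ε 𝕜 2 ^ 2 + ε 𝕜 3 ^ 2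

/-- ε₂²ε₃² + ε₂²ε₄² + ε₃²ε₄² -/
def prod23 : MvPolynomial (Fin 4) 𝕜 :=
  ε 𝕜 1 ^ 2 * ε 𝕜 2 ^ 2 + ε 𝕜 1 ^ 2 * ε 𝕜 3 ^ 2 + ε 𝕜 2 ^ 2 * ε 𝕜 3 ^ 2

def p₁ : MvPolynomial (Fin 4) 𝕜 := ε 𝕜 0 ^ 2

def p₂ : MvPolynomial (Fin 4) 𝕜 := ε 𝕜 0 ^ 4 * sq23 𝕜

def p₃ : MvPolynomial (Fin 4) 𝕜 :=
  ε 𝕜 0 ^ 4 * (C (1/12 : 𝕜) * sq23 𝕜 ^ 2 - C (1/4 : 𝕜) * prod23 𝕜)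

def p₄ : MvPolynomial (Fin 4) 𝕜 :=
  ε 𝕜 0 ^ 6 * (- (C (3/2 : 𝕜) * (ε 𝕜 1 ^ 2 * ε 𝕜 2 ^ 2 * ε 𝕜 3 ^ 2))
      - C (1/9 : 𝕜) * sq23 𝕜 ^ 3 + C (1/2 : 𝕜) * sq23 𝕜 * prod23 𝕜)

/-- An element satisfying an even sextic relation with nonzero leading coefficient is algebraic. -/
lemma isAlgebraic_of_sextic {R S : Type*} [CommRing R] [CommRing S] [Algebra R S]
    {x : S} (c₆ c₄ c₂ c₀ : R) (hc : c₆ ≠ 0)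
    (h : algebraMap R S c₆ * x ^ 6 + algebraMap R S c₄ * x ^ 4 + algebraMap R S c₂ * x ^ 2
      + algebraMap R S c₀ = 0) : IsAlgebraic R x := by
  refine ⟨Polynomial.C c₆ * Polynomial.X ^ 6 + Polynomial.C c₄ * Polynomial.X ^ 4
    + Polynomial.C c₂ * Polynomial.X ^ 2 + Polynomial.C c₀, fun h0 => hc ?_, ?_⟩
  · have := congrArg (fun p => Polynomial.coeff p 6) h0
    simpa [Polynomial.coeff_X_pow, Polynomial.coeff_C] using this
  · simpa using h

/-- A subalgebra containing the four polynomials has all the variables algebraic over it. -/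
lemma isAlgebraic_X (A : Subalgebra 𝕜 (MvPolynomial (Fin 4) 𝕜))
    (h₁ : p₁ 𝕜 ∈ A) (h₂ : p₂ 𝕜 ∈ A) (h₃ : p₃ 𝕜 ∈ A) (h₄ : p₄ 𝕜 ∈ A) (i : Fin 4) :
    IsAlgebraic A (X i : MvPolynomial (Fin 4) 𝕜) := by
  have hp : p₁ 𝕜 ≠ 0 := pow_ne_zero _ (X_ne_zero _)
  let a : A := ⟨p₁ 𝕜, h₁⟩
  let b : A := ⟨p₂ 𝕜, h₂⟩
  let c : A := ⟨p₃ 𝕜, h₃⟩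
  let d : A := ⟨p₄ 𝕜, h₄⟩
  have ha : a ≠ 0 := fun h => hp (congrArg Subtype.val h)
  -- `Q = p₁⁴ q` and `E = p₁⁶ e`, expressed through the generators.
  let Q : A := algebraMap 𝕜 A (1 / 3) * b ^ 2 - 4 * a ^ 2 * c
  let E : A := algebraMap 𝕜 A (2 / 3) *
    (-(a ^ 3 * d) - algebraMap 𝕜 A (1 / 9) * b ^ 3 + algebraMap 𝕜 A (1 / 2) * b * Q)
  have hb : (b : MvPolynomial (Fin 4) 𝕜) = ε 𝕜 0 ^ 4 * sq23 𝕜 := rfl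
  have hQ : (Q : MvPolynomial (Fin 4) 𝕜) = ε 𝕜 0 ^ 8 * prod23 𝕜 := by
    have e₁ : (C (1 / 3) : MvPolynomial (Fin 4) 𝕜) = 4 * C (1 / 12) := by
      rw [← map_ofNat C 4, ← C_mul]; congr 1; norm_num
    have e₂ : (1 : MvPolynomial (Fin 4) 𝕜) = 4 * C (1 / 4) := by
      rw [← map_ofNat C 4, ← C_mul, ← C_1]; congr 1; norm_num
    change C (1 / 3) * p₂ 𝕜 ^ 2 - 4 * p₁ 𝕜 ^ 2 * p₃ 𝕜 = _
    rw [e₁, p₁, p₂, p₃]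
    linear_combination (-ε 𝕜 0 ^ 8 * prod23 𝕜) * e₂
  have hE : (E : MvPolynomial (Fin 4) 𝕜) =
      ε 𝕜 0 ^ 12 * (ε 𝕜 1 ^ 2 * ε 𝕜 2 ^ 2 * ε 𝕜 3 ^ 2) := by
    have e₁ : (C (2 / 3) * C (3 / 2) : MvPolynomial (Fin 4) 𝕜) = 1 := by
      rw [← C_mul, ← C_1]; congr 1; norm_num
    change C (2 / 3) * (-(p₁ 𝕜 ^ 3 * p₄ 𝕜) - C (1 / 9) * p₂ 𝕜 ^ 3
      + C (1 / 2) * p₂ 𝕜 * (Q : MvPolynomial (Fin 4) 𝕜)) = _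
    rw [hQ, p₁, p₂, p₄]
    linear_combination (ε 𝕜 0 ^ 12 * (ε 𝕜 1 ^ 2 * ε 𝕜 2 ^ 2 * ε 𝕜 3 ^ 2)) * e₁
  by_cases hi : i = 0
  · subst hi
    -- The relation `ε₁² = p₁` in the sextic form `ε₁⁶ = p₁² ε₁²`.
    refine isAlgebraic_of_sextic (R := A) 1 0 (-a ^ 2) 0 one_ne_zero ?_
    change 1 * X 0 ^ 6 + 0 * X 0 ^ 4 + -(X 0 ^ 2 : MvPolynomial (Fin 4) 𝕜) ^ 2 * X 0 ^ 2 + 0 = 0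
    ring
  · refine isAlgebraic_of_sextic (R := A) (a ^ 6) (-(a ^ 4 * b)) (a ^ 2 * Q) (-E)
      (pow_ne_zero _ ha) ?_
    change p₁ 𝕜 ^ 6 * X i ^ 6 + -(p₁ 𝕜 ^ 4 * (b : MvPolynomial (Fin 4) 𝕜)) * X i ^ 4
      + p₁ 𝕜 ^ 2 * (Q : MvPolynomial (Fin 4) 𝕜) * X i ^ 2 + -(E : MvPolynomial (Fin 4) 𝕜) = 0
    rw [hb, hQ, hE, p₁, sq23, prod23]
    fin_cases i
    · exact absurd rfl hi
    all_goals
      simp only [Fin.mk_one, Fin.reduceFinMk]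
      ring

theorem algebraicIndependent_p₁_p₂_p₃_p₄ :
    AlgebraicIndependent 𝕜 ![p₁ 𝕜, p₂ 𝕜, p₃ 𝕜, p₄ 𝕜] := by
  have hmem (i : Fin 4) := Algebra.subset_adjoin (R := 𝕜)
    (Set.mem_range_self (f := ![p₁ 𝕜, p₂ 𝕜, p₃ 𝕜, p₄ 𝕜]) i)
  have hX := isAlgebraic_X 𝕜 _ (hmem 0) (hmem 1) (hmem 2) (hmem 3)
  have : Algebra.IsAlgebraic (Algebra.adjoin 𝕜 (Set.range ![p₁ 𝕜, p₂ 𝕜, p₃ 𝕜, p₄ 𝕜]))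
      (MvPolynomial (Fin 4) 𝕜) := by
    refine ⟨fun f => ?_⟩
    induction f using MvPolynomial.induction_on with
    | C r => exact isAlgebraic_algebraMap (algebraMap 𝕜 (Algebra.adjoin 𝕜 _) r)
    | add f g hf hg => exact hf.add hg
    | mul_X f i hf => exact hf.mul (hX i)
  refine (Algebra.IsAlgebraic.isTranscendenceBasis_of_lift_le_trdeg_of_finite 𝕜
    ![p₁ 𝕜, p₂ 𝕜, p₃ 𝕜, p₄ 𝕜] ?_).1
  rw [MvPolynomial.trdeg_of_isDomain]
  simp

end
end
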